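/- Let κ > 0 and let U ⊆ ℝ² be an open connected set whose complement K = ℝ² \ U is compact. Let L = {x₀ + sθ : s ∈ ℝ} be a straight line (x₀ ∈ ℝ², θ a unit vector) with L ⊆ U, and let Λ ⊆ L be a nonempty open subinterval of L. If ψ₁ and ψ₂ are radiation solutions on U such that Im ψ₁(x) = Im ψ₂(x) for all x ∈ Λ, then ψ₁(x) = ψ₂(x) for all x ∈ L. -/

import Mathlib

noncomputable section

open Real MeasureTheory Set

/-- The plane `ℝ²`. -/
abbrev R2 : Type := EuclideanSpace ℝ (Fin 2)

/-- The Laplacian of a complex-valued function on `ℝ²`, as the sum of the second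
derivatives along the standard coordinate directions. -/
def laplacian2 (f : R2 → ℂ) (x : R2) : ℂ :=
  ∑ i : Fin 2,
    fderiv ℝ (fun y => fderiv ℝ f y (EuclideanSpace.single i 1)) x (EuclideanSpace.single i 1)

/-- `ψ` is a radiation solution of the Helmholtz equation `Δψ + κ²ψ = 0` on `U`:
it is `C²` on `U`, satisfies the Helmholtz equation on `U`, and satisfies the
Sommerfeld radiation condition
`√|x| (∂ψ/∂|x| − iκψ)(x) → 0` as `|x| → ∞`, uniformly in `x/|x|`. -/
def IsRadiationSolution (κ : ℝ) (U : Set R2) (ψ : R2 → ℂ) : Prop :=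
  ContDiffOn ℝ 2 ψ U ∧
  (∀ x ∈ U, laplacian2 ψ x + (κ : ℂ) ^ 2 * ψ x = 0) ∧
  ∀ ε > 0, ∃ R > 0, ∀ x ∈ U, R ≤ ‖x‖ →
    ‖(Real.sqrt ‖x‖ : ℂ) *
      (fderiv ℝ ψ x (‖x‖⁻¹ • x) - Complex.I * (κ : ℂ) * ψ x)‖ < ε

/-!
The difference of the two solutions is again a radiation solution, and after a similarity the line
is the real axis of `ℂ` and `κ = 1`. Cutting the solution `ψ` off near the obstacle leaves a
compactly supported source `g = Δv + v` away from the axis, and Green's identity, with the radiation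
condition at infinity, gives `-2π ψ s = ∫ hankel |y - s| * g y` on the axis, where `hankel` is the
outgoing fundamental solution up to normalisation. Since
`|y - s| = √((s - re y) ^ 2 + (im y) ^ 2)`, the integral continues holomorphically in `s` to a
neighbourhood of the axis and to a right half-plane, where it is `O(exp (-im s))`. If `ψ` is real on
an interval, it is real on the whole axis, so by Schwarz reflection the continuation is
`O(exp (-|im s|))` on the half-plane. By Carlson's theorem it vanishes, and hence so does `ψ` on the
axis.
-/

open Filter Topology Asymptotics Bornology InnerProductSpace
open Complex (I)
open scoped Laplacian

/-! ### The outgoing Hankel function -/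

/-- The branch on `(0, ∞)` of the square root of `u² - 2iu` that is asymptotic to `u`: its inverse
is the weight in the Laplace integral for the Hankel function. -/
def hankelRoot (u : ℝ) : ℂ := u * (1 - 2 * I / u) ^ (2⁻¹ : ℂ)

lemma one_sub_two_mul_I_div_mem_slitPlane (u : ℝ) : (1 - 2 * I / u : ℂ) ∈ Complex.slitPlane := by
  left
  simp [Complex.div_re]

lemma hankelRoot_sq {u : ℝ} (hu : u ≠ 0) : hankelRoot u ^ 2 = u * (u - 2 * I) := by
  have hu' : (u : ℂ) ≠ 0 := mod_cast hu
  have hsq : ((1 - 2 * I / u : ℂ) ^ (2⁻¹ : ℂ)) ^ 2 = 1 - 2 * I / u :=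
    mod_cast Complex.cpow_nat_inv_pow (1 - 2 * I / u) two_ne_zero
  rw [hankelRoot, mul_pow, hsq]
  field_simp

lemma hankelRoot_ne_zero {u : ℝ} (hu : u ≠ 0) : hankelRoot u ≠ 0 := by
  intro h
  have hsq := congrArg Complex.im (hankelRoot_sq hu)
  simp [h, hu] at hsq

section

variable {u : ℝ}

lemma norm_hankelRoot_sq (hu : 0 < u) : ‖hankelRoot u‖ ^ 2 = u * ‖(u - 2 * I : ℂ)‖ := by
  rw [← norm_pow, hankelRoot_sq hu.ne', norm_mul, Complex.norm_of_nonneg hu.le]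

lemma le_norm_hankelRoot (hu : 0 < u) : u ≤ ‖hankelRoot u‖ := by
  have h : u ≤ ‖(u - 2 * I : ℂ)‖ := by simpa using Complex.re_le_norm (u - 2 * I)
  refine le_of_sq_le_sq ?_ (norm_nonneg _)
  rw [norm_hankelRoot_sq hu, sq]
  gcongr

lemma sqrt_le_norm_hankelRoot (hu : 0 < u) : √u ≤ ‖hankelRoot u‖ := by
  have h : 2 ≤ ‖(u - 2 * I : ℂ)‖ := by simpa using Complex.abs_im_le_norm (u - 2 * I)
  rw [Real.sqrt_le_left (norm_nonneg _), norm_hankelRoot_sq hu]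
  nlinarith

lemma norm_hankelRoot_le_sqrt (hu : 0 < u) : ‖hankelRoot u‖ ≤ √(u * (u + 2)) := by
  refine Real.le_sqrt_of_sq_le ?_
  rw [norm_hankelRoot_sq hu]
  gcongr
  exact (norm_sub_le _ _).trans (by simp [abs_of_pos hu])

lemma hasDerivAt_hankelRoot (hu : u ≠ 0) :
    HasDerivAt hankelRoot ((u - I) / hankelRoot u) u := by
  have hu' : (u : ℂ) ≠ 0 := mod_cast hu
  set p := (1 - 2 * I / u : ℂ) ^ (2⁻¹ : ℂ) with hp
  have hsq : p ^ 2 = 1 - 2 * I / u :=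
    mod_cast Complex.cpow_nat_inv_pow (1 - 2 * I / u) two_ne_zero
  have hp0 : p ≠ 0 := fun h => by
    apply Complex.slitPlane_ne_zero (one_sub_two_mul_I_div_mem_slitPlane u)
    simp [← hsq, h]
  have hinner : HasDerivAt (fun z : ℂ => 1 - 2 * I / z) (2 * I / u ^ 2) (u : ℂ) := by
    convert! ((hasDerivAt_inv hu').const_mul (2 * I)).const_sub 1 using 1
    field_simp
  have hmul := (hasDerivAt_id (u : ℂ)).mul
    (hinner.cpow_const (c := (2⁻¹ : ℂ)) (one_sub_two_mul_I_div_mem_slitPlane u))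
  refine hmul.comp_ofReal.congr_deriv ?_
  rw [Complex.cpow_sub _ _ (Complex.slitPlane_ne_zero (one_sub_two_mul_I_div_mem_slitPlane u)),
    hankelRoot, Complex.cpow_one, ← hp, ← hsq, id]
  have hsq' : p ^ 2 * u = u - 2 * I := by rw [hsq]; field_simp
  field_simp
  linear_combination hsq'

end

lemma continuousOn_hankelRoot : ContinuousOn hankelRoot (Ioi 0) :=
  fun _ hu => (hasDerivAt_hankelRoot (ne_of_gt hu)).continuousAt.continuousWithinAt

lemma tendsto_hankelRoot_nhdsGT_zero : Tendsto hankelRoot (𝓝[>] 0) (𝓝 0) := by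
  have hsqrt : Tendsto (fun u : ℝ => √(u * (u + 2))) (𝓝[>] 0) (𝓝 0) := by
    have : Continuous fun u : ℝ => √(u * (u + 2)) := by fun_prop
    simpa using (this.tendsto 0).mono_left nhdsWithin_le_nhds
  refine squeeze_zero_norm' ?_ hsqrt
  filter_upwards [self_mem_nhdsWithin] with u hu using norm_hankelRoot_le_sqrt hu

lemma tendsto_div_hankelRoot_atTop :
    Tendsto (fun u : ℝ => (u : ℂ) / hankelRoot u) atTop (𝓝 1) := by
  have hinner : Tendsto (fun u : ℝ => (1 - 2 * I / u : ℂ)) atTop (𝓝 1) := by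
    have hinv : Tendsto (fun u : ℝ => ((u⁻¹ : ℝ) : ℂ)) atTop (𝓝 ((0 : ℝ) : ℂ)) :=
      (Complex.continuous_ofReal.tendsto 0).comp tendsto_inv_atTop_zero
    simpa [div_eq_mul_inv] using (hinv.const_mul (2 * I)).const_sub 1
  have hroot : Tendsto (fun u : ℝ => ((1 - 2 * I / u : ℂ) ^ (2⁻¹ : ℂ))⁻¹) atTop (𝓝 1) := by
    simpa using (hinner.cpow (tendsto_const_nhds (x := (2⁻¹ : ℂ))) (by simp)).inv₀ (by simp)
  refine hroot.congr' ?_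
  filter_upwards [eventually_ne_atTop 0] with u hu
  have hu' : (u : ℂ) ≠ 0 := mod_cast hu
  rw [hankelRoot]
  field_simp

/-- The integrand of `hankelLaplace`. -/
def hankelIntegrand (k : ℕ) (z : ℂ) (u : ℝ) : ℂ :=
  (-u) ^ k * Complex.exp (-z * u) * (hankelRoot u)⁻¹

/-- The Laplace integral that is left of the Hankel function once its oscillating factor is taken
out (for `k = 0`), together with its derivatives in `z` (for `k > 0`). -/
def hankelLaplace (k : ℕ) (z : ℂ) : ℂ := ∫ u in Ioi (0 : ℝ), hankelIntegrand k z u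

lemma integrableOn_rpow_mul_exp_neg_mul {s b : ℝ} (hs : -1 < s) (hb : 0 < b) :
    IntegrableOn (fun u : ℝ => u ^ s * rexp (-b * u)) (Ioi 0) := by
  simpa using integrableOn_rpow_mul_exp_neg_mul_rpow hs one_pos hb

lemma neg_one_lt_natCast_sub_half (k : ℕ) : (-1 : ℝ) < k - 1 / 2 := by
  linarith [(k.cast_nonneg : (0 : ℝ) ≤ k)]

lemma norm_hankelIntegrand_le (k : ℕ) {z : ℂ} {b u : ℝ} (hb : b ≤ z.re) (hu : 0 < u) :
    ‖hankelIntegrand k z u‖ ≤ u ^ ((k : ℝ) - 1 / 2) * rexp (-b * u) := by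
  have hroot : ‖hankelRoot u‖⁻¹ ≤ (√u)⁻¹ :=
    inv_anti₀ (Real.sqrt_pos.2 hu) (sqrt_le_norm_hankelRoot hu)
  have hexp : rexp (-z * u).re ≤ rexp (-b * u) := by
    simpa using mul_le_mul_of_nonneg_right hb hu.le
  rw [hankelIntegrand, norm_mul, norm_mul, norm_pow, norm_neg, Complex.norm_of_nonneg hu.le,
    Complex.norm_exp, norm_inv, Real.rpow_sub hu, Real.rpow_natCast, ← Real.sqrt_eq_rpow]
  calc u ^ k * rexp (-z * u).re * ‖hankelRoot u‖⁻¹ ≤ u ^ k * rexp (-b * u) * (√u)⁻¹ := by gcongr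
    _ = u ^ k / √u * rexp (-b * u) := by ring

lemma aestronglyMeasurable_hankelIntegrand (k : ℕ) (z : ℂ) :
    AEStronglyMeasurable (hankelIntegrand k z) (volume.restrict (Ioi 0)) := by
  refine ContinuousOn.aestronglyMeasurable ?_ measurableSet_Ioi
  exact ContinuousOn.mul (by fun_prop)
    (continuousOn_hankelRoot.inv₀ fun u hu => hankelRoot_ne_zero (ne_of_gt hu))

lemma integrableOn_hankelIntegrand (k : ℕ) {z : ℂ} (hz : 0 < z.re) :
    IntegrableOn (hankelIntegrand k z) (Ioi 0) := by
  refine Integrable.mono' (integrableOn_rpow_mul_exp_neg_mul (neg_one_lt_natCast_sub_half k) hz)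
    (aestronglyMeasurable_hankelIntegrand k z) ?_
  filter_upwards [ae_restrict_mem measurableSet_Ioi] with u hu
    using norm_hankelIntegrand_le k le_rfl hu

lemma hasDerivAt_hankelIntegrand (k : ℕ) (z : ℂ) (u : ℝ) :
    HasDerivAt (fun w => hankelIntegrand k w u) (hankelIntegrand (k + 1) z u) z := by
  have hexp : HasDerivAt (fun w : ℂ => Complex.exp (-w * u)) (Complex.exp (-z * u) * (-1 * u)) z :=
    ((hasDerivAt_id z).neg.mul_const (u : ℂ)).cexp
  refine ((hexp.const_mul ((-u : ℂ) ^ k)).mul_const (hankelRoot u)⁻¹).congr_deriv ?_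
  rw [hankelIntegrand]
  ring

lemma hasDerivAt_hankelLaplace (k : ℕ) {z : ℂ} (hz : 0 < z.re) :
    HasDerivAt (hankelLaplace k) (hankelLaplace (k + 1) z) z := by
  have hs : {w : ℂ | z.re / 2 < w.re} ∈ 𝓝 z :=
    (isOpen_lt continuous_const Complex.continuous_re).mem_nhds (half_lt_self hz)
  refine (hasDerivAt_integral_of_dominated_loc_of_deriv_le
    (F' := fun w u => hankelIntegrand (k + 1) w u)
    (bound := fun u => u ^ (((k + 1 : ℕ) : ℝ) - 1 / 2) * rexp (-(z.re / 2) * u)) hs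
    (Eventually.of_forall fun w => aestronglyMeasurable_hankelIntegrand k w)
    (integrableOn_hankelIntegrand k hz) (aestronglyMeasurable_hankelIntegrand _ z) ?_
    (integrableOn_rpow_mul_exp_neg_mul (neg_one_lt_natCast_sub_half _) (half_pos hz))
    (Eventually.of_forall fun u w _ => hasDerivAt_hankelIntegrand k w u)).2
  filter_upwards [ae_restrict_mem measurableSet_Ioi] with u hu w hw
    using norm_hankelIntegrand_le (k + 1) (le_of_lt hw) hu

lemma norm_hankelLaplace_le (k : ℕ) {z : ℂ} (hz : 0 < z.re) :
    ‖hankelLaplace k z‖ ≤ (1 / z.re) ^ ((k : ℝ) + 1 / 2) * Real.Gamma ((k : ℝ) + 1 / 2) := by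
  rw [← Real.integral_rpow_mul_exp_neg_mul_Ioi (by positivity) hz,
    show (k : ℝ) + 1 / 2 - 1 = k - 1 / 2 by ring]
  simp_rw [← neg_mul]
  refine norm_integral_le_of_norm_le
    (integrableOn_rpow_mul_exp_neg_mul (neg_one_lt_natCast_sub_half k) hz) ?_
  filter_upwards [ae_restrict_mem measurableSet_Ioi] with u hu
    using norm_hankelIntegrand_le k le_rfl hu

lemma tendsto_exp_neg_mul_mul_hankelRoot_atTop {z : ℂ} (hz : 0 < z.re) :
    Tendsto (fun u : ℝ => Complex.exp (-z * u) * hankelRoot u) atTop (𝓝 0) := by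
  have hlim : Tendsto (fun u : ℝ => rexp (-z.re * u) * (u + 2)) atTop (𝓝 0) := by
    have h := (tendsto_rpow_mul_exp_neg_mul_atTop_nhds_zero 1 z.re hz).add
      ((tendsto_rpow_mul_exp_neg_mul_atTop_nhds_zero 0 z.re hz).const_mul 2)
    simp only [Real.rpow_one, Real.rpow_zero, one_mul, mul_zero, add_zero] at h
    exact h.congr fun u => by ring
  refine squeeze_zero_norm' ?_ hlim
  filter_upwards [eventually_gt_atTop 0] with u hu
  have hroot : ‖hankelRoot u‖ ≤ u + 2 :=
    (norm_hankelRoot_le_sqrt hu).trans <| Real.sqrt_le_iff.2 ⟨by positivity, by nlinarith⟩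
  have hre : (-z * u).re = -z.re * u := by simp
  rw [norm_mul, Complex.norm_exp, hre]
  gcongr

lemma hankelLaplace_ode {z : ℂ} (hz : 0 < z.re) :
    z * hankelLaplace 2 z + (2 * I * z + 1) * hankelLaplace 1 z + I * hankelLaplace 0 z = 0 := by
  have i₀ := (integrableOn_hankelIntegrand 0 hz).const_mul I
  have i₁ := (integrableOn_hankelIntegrand 1 hz).const_mul (2 * I * z + 1)
  have i₂ := (integrableOn_hankelIntegrand 2 hz).const_mul z
  have i₁₂ : IntegrableOn (fun u => z * hankelIntegrand 2 z u
    + (2 * I * z + 1) * hankelIntegrand 1 z u) (Ioi 0) := i₂.add i₁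
  have hexp (u : ℝ) :
      HasDerivAt (fun u : ℝ => Complex.exp (-z * u)) (Complex.exp (-z * u) * (-z * 1)) u :=
    ((hasDerivAt_id (u : ℂ)).const_mul (-z)).cexp.comp_ofReal
  have hzero : Tendsto ((fun u : ℝ => Complex.exp (-z * u)) * hankelRoot) (𝓝[>] 0) (𝓝 0) := by
    have := ((hexp 0).continuousAt.tendsto.mono_left nhdsWithin_le_nhds).mul
      tendsto_hankelRoot_nhdsGT_zero
    simpa [Pi.mul_def] using this
  have htotal : ∀ u ∈ Ioi (0 : ℝ), Complex.exp (-z * u) * (-z * 1) * hankelRoot u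
      + Complex.exp (-z * u) * ((u - I) / hankelRoot u)
      = -(z * hankelIntegrand 2 z u + (2 * I * z + 1) * hankelIntegrand 1 z u
        + I * hankelIntegrand 0 z u) := fun u hu => by
    have h0 := hankelRoot_ne_zero (ne_of_gt hu)
    have hsq := hankelRoot_sq (ne_of_gt hu)
    simp only [hankelIntegrand]
    field_simp
    rw [hsq]
    ring
  have hparts := integral_Ioi_deriv_mul_eq_sub (fun u _ => hexp u)
    (fun u hu => hasDerivAt_hankelRoot (ne_of_gt hu))
    ((i₁₂.add i₀).neg.congr_fun (fun u hu => (htotal u hu).symm) measurableSet_Ioi) hzero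
    (tendsto_exp_neg_mul_mul_hankelRoot_atTop hz)
  rw [setIntegral_congr_fun measurableSet_Ioi htotal, integral_neg, integral_add i₁₂ i₀,
    integral_add i₂ i₁, integral_const_mul, integral_const_mul, integral_const_mul, sub_zero,
    neg_eq_zero] at hparts
  exact hparts

lemma integrableOn_exp_neg_Ioi_zero : IntegrableOn (fun t : ℝ => rexp (-t)) (Ioi 0) := by
  simpa using integrableOn_rpow_mul_exp_neg_mul (s := 0) (by norm_num) one_pos

lemma mul_hankelLaplace_one {r : ℝ} (hr : 0 < r) :
    r * hankelLaplace 1 r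
      = -∫ t in Ioi (0 : ℝ), rexp (-t) * (((r⁻¹ * t : ℝ) : ℂ) / hankelRoot (r⁻¹ * t)) := by
  have hscale := integral_comp_mul_left_Ioi
    (fun u : ℝ => (rexp (-(r * u)) : ℂ) * ((u : ℂ) / hankelRoot u)) 0 (inv_pos.2 hr)
  simp only [mul_zero, inv_inv, mul_inv_cancel_left₀ hr.ne'] at hscale
  rw [hscale, Complex.real_smul, hankelLaplace, ← mul_neg, ← integral_neg]
  congr 1
  refine integral_congr_ae (Eventually.of_forall fun u => ?_)
  simp only [hankelIntegrand]
  push_cast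
  ring_nf

lemma tendsto_mul_hankelLaplace_one :
    Tendsto (fun r : ℝ => (r : ℂ) * hankelLaplace 1 r) (𝓝[>] 0) (𝓝 (-1)) := by
  have hlim : Tendsto (fun r : ℝ => ∫ t in Ioi (0 : ℝ),
      (rexp (-t) * (((r⁻¹ * t : ℝ) : ℂ) / hankelRoot (r⁻¹ * t)) : ℂ)) (𝓝[>] 0)
      (𝓝 (∫ t in Ioi (0 : ℝ), (rexp (-t) * 1 : ℂ))) := by
    refine tendsto_integral_filter_of_dominated_convergence (fun u => rexp (-u)) ?_ ?_
      integrableOn_exp_neg_Ioi_zero ?_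
    · filter_upwards [self_mem_nhdsWithin] with r hr
      have hpos : ∀ t ∈ Ioi (0 : ℝ), 0 < r⁻¹ * t := fun t ht => mul_pos (inv_pos.2 hr) ht
      refine ContinuousOn.aestronglyMeasurable ?_ measurableSet_Ioi
      refine ContinuousOn.mul (by fun_prop) (ContinuousOn.div (by fun_prop) ?_ ?_)
      · exact continuousOn_hankelRoot.comp (by fun_prop) hpos
      · exact fun t ht => hankelRoot_ne_zero (hpos t ht).ne'
    · filter_upwards [self_mem_nhdsWithin] with r hr
      filter_upwards [ae_restrict_mem measurableSet_Ioi] with t ht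
      have hpos : 0 < r⁻¹ * t := mul_pos (inv_pos.2 hr) ht
      rw [norm_mul, norm_div, Complex.norm_of_nonneg hpos.le,
        Complex.norm_of_nonneg (Real.exp_nonneg _)]
      exact mul_le_of_le_one_right (Real.exp_nonneg _)
        (div_le_one_of_le₀ (le_norm_hankelRoot hpos) (norm_nonneg _))
    · filter_upwards [ae_restrict_mem measurableSet_Ioi] with t ht
      exact (tendsto_div_hankelRoot_atTop.comp
        (tendsto_inv_nhdsGT_zero.atTop_mul_const ht)).const_mul _
  simp only [mul_one, integral_complex_ofReal, integral_exp_neg_Ioi_zero, Complex.ofReal_one]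
    at hlim
  refine hlim.neg.congr' ?_
  filter_upwards [self_mem_nhdsWithin] with r hr using (mul_hankelLaplace_one hr).symm

/-- The multiple of the outgoing Hankel function `H₀⁽¹⁾`, on the right half-plane, for which
`r * deriv hankel r` tends to `-1` at `0`. -/
def hankel (z : ℂ) : ℂ := Complex.exp (I * z) * hankelLaplace 0 z

section

variable {z : ℂ}

lemma hasDerivAt_cexp_I_mul (z : ℂ) :
    HasDerivAt (fun z => Complex.exp (I * z)) (Complex.exp (I * z) * I) z := by
  simpa using ((hasDerivAt_id z).const_mul I).cexp

lemma hasDerivAt_hankel (hz : 0 < z.re) :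
    HasDerivAt hankel (Complex.exp (I * z) * (I * hankelLaplace 0 z + hankelLaplace 1 z)) z :=
  ((hasDerivAt_cexp_I_mul z).mul (hasDerivAt_hankelLaplace 0 hz)).congr_deriv (by ring)

lemma deriv_hankel (hz : 0 < z.re) :
    deriv hankel z = Complex.exp (I * z) * (I * hankelLaplace 0 z + hankelLaplace 1 z) :=
  (hasDerivAt_hankel hz).deriv

lemma differentiableAt_hankel (hz : 0 < z.re) : DifferentiableAt ℂ hankel z :=
  (hasDerivAt_hankel hz).differentiableAt

-- Bessel's equation of order zero, in divergence form.
lemma hasDerivAt_mul_deriv_hankel (hz : 0 < z.re) :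
    HasDerivAt (fun z => z * deriv hankel z) (-(z * hankel z)) z := by
  have hd := (hasDerivAt_id z).mul ((hasDerivAt_cexp_I_mul z).mul
    (((hasDerivAt_hankelLaplace 0 hz).const_mul I).add (hasDerivAt_hankelLaplace 1 hz)))
  refine (hd.congr_of_eventuallyEq ?_).congr_deriv ?_
  · filter_upwards [(isOpen_lt continuous_const Complex.continuous_re).mem_nhds hz] with w hw
    rw [deriv_hankel hw]
    rfl
  · simp only [hankel, id, Pi.add_apply, Pi.mul_apply]
    linear_combination Complex.exp (I * z) * hankelLaplace_ode hz
      + Complex.exp (I * z) * z * hankelLaplace 0 z * Complex.I_sq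

lemma norm_hankel_le (hz : 0 < z.re) : ‖hankel z‖ ≤ rexp (-z.im) * √(π / z.re) := by
  have h := norm_hankelLaplace_le 0 hz
  rw [Nat.cast_zero, zero_add, Real.Gamma_one_half_eq, ← Real.sqrt_eq_rpow,
    ← Real.sqrt_mul (by positivity), one_div_mul_eq_div] at h
  have hre : (I * z).re = -z.im := by simp
  rw [hankel, norm_mul, Complex.norm_exp, hre]
  gcongr

end

section

variable {r : ℝ}

lemma norm_hankel_ofReal_le (hr : 0 < r) : ‖hankel r‖ ≤ √(π / r) := by
  simpa using norm_hankel_le (z := r) (by simpa using hr)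

lemma norm_deriv_hankel_sub_le (hr : 0 < r) :
    ‖deriv hankel r - I * hankel r‖ ≤ √(π / r) / (2 * r) := by
  have h := norm_hankelLaplace_le 1 (z := r) (by simpa using hr)
  have hΓ : Real.Gamma (((1 : ℕ) : ℝ) + 1 / 2) = 1 / 2 * √π := by
    rw [Nat.cast_one, add_comm, Real.Gamma_add_one (by norm_num), Real.Gamma_one_half_eq]
  have hdiff : deriv hankel r - I * hankel r = Complex.exp (I * r) * hankelLaplace 1 r := by
    rw [deriv_hankel (by simpa using hr), hankel]
    ring
  rw [hdiff, norm_mul, mul_comm I, Complex.norm_exp_ofReal_mul_I, one_mul]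
  refine h.trans_eq ?_
  rw [hΓ, Complex.ofReal_re, Real.rpow_add (by positivity), ← Real.sqrt_eq_rpow, Nat.cast_one,
    Real.rpow_one, Real.sqrt_div zero_le_one, Real.sqrt_one, Real.sqrt_div pi_nonneg]
  ring

end

lemma tendsto_mul_hankel_nhdsGT_zero :
    Tendsto (fun r : ℝ => (r : ℂ) * hankel r) (𝓝[>] 0) (𝓝 0) := by
  have hsqrt : Tendsto (fun r : ℝ => √(r * π)) (𝓝[>] 0) (𝓝 0) := by
    have : Continuous fun r : ℝ => √(r * π) := by fun_prop
    simpa using (this.tendsto 0).mono_left nhdsWithin_le_nhds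
  refine squeeze_zero_norm' ?_ hsqrt
  filter_upwards [self_mem_nhdsWithin] with r (hr : 0 < r)
  rw [norm_mul, Complex.norm_of_nonneg hr.le]
  calc r * ‖hankel r‖ ≤ r * √(π / r) := by gcongr; exact norm_hankel_ofReal_le hr
    _ = √(r ^ 2 * (π / r)) := by rw [Real.sqrt_mul (sq_nonneg r), Real.sqrt_sq hr.le]
    _ = √(r * π) := by congr 1; field_simp

lemma tendsto_mul_deriv_hankel_nhdsGT_zero :
    Tendsto (fun r : ℝ => (r : ℂ) * deriv hankel r) (𝓝[>] 0) (𝓝 (-1)) := by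
  have hexp : Tendsto (fun r : ℝ => Complex.exp (I * r)) (𝓝[>] 0) (𝓝 1) := by
    have : Continuous fun r : ℝ => Complex.exp (I * r) := by fun_prop
    simpa using (this.tendsto 0).mono_left nhdsWithin_le_nhds
  have hsum := (tendsto_mul_hankel_nhdsGT_zero.const_mul I).add
    (hexp.mul tendsto_mul_hankelLaplace_one)
  simp only [mul_zero, zero_add, one_mul] at hsum
  refine hsum.congr' ?_
  filter_upwards [self_mem_nhdsWithin] with r hr
  rw [hankel, deriv_hankel (by simpa using hr)]
  ring
/-! ### Circular means -/

section

variable {F : Type*} [NormedAddCommGroup F] [NormedSpace ℝ F]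

lemma hasDerivAt_intervalIntegral_of_continuous {f f' : ℝ → ℝ → F} {a b : ℝ}
    (hf : Continuous (Function.uncurry f)) (hf' : Continuous (Function.uncurry f'))
    (hd : ∀ r t, HasDerivAt (fun r => f r t) (f' r t) r) (r : ℝ) :
    HasDerivAt (fun r => ∫ t in a..b, f r t) (∫ t in a..b, f' r t) r := by
  obtain ⟨C, hC⟩ := ((isCompact_closedBall r 1).prod isCompact_uIcc).exists_bound_of_continuousOn
    (s := Metric.closedBall r 1 ×ˢ uIcc a b) hf'.continuousOn
  have hfr (r : ℝ) : Continuous (f r) := hf.comp (Continuous.prodMk_right r)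
  have hfr' (r : ℝ) : Continuous (f' r) := hf'.comp (Continuous.prodMk_right r)
  exact (intervalIntegral.hasDerivAt_integral_of_dominated_loc_of_deriv_le
    (bound := fun _ => C) (Metric.closedBall_mem_nhds r one_pos)
    (Eventually.of_forall fun r => (hfr r).aestronglyMeasurable)
    ((hfr r).intervalIntegrable _ _) (hfr' r).aestronglyMeasurable
    (Eventually.of_forall fun t ht s hs => hC (s, t) ⟨hs, uIoc_subset_uIcc ht⟩)
    intervalIntegrable_const (Eventually.of_forall fun t _ s _ => hd s t)).2

lemma circleMap_eq_add_smul (x : ℂ) (r θ : ℝ) :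
    circleMap x r θ = x + r • circleMap 0 1 θ := by
  simp [circleMap]

lemma hasDerivAt_circleMap_radius (x : ℂ) (r θ : ℝ) :
    HasDerivAt (fun r => circleMap x r θ) (circleMap 0 1 θ) r := by
  simp only [circleMap_eq_add_smul x]
  simpa using ((hasDerivAt_id r).smul_const (circleMap 0 1 θ)).const_add x

lemma laplacian_eq_of_linearIsometryEquiv {E : Type*} [NormedAddCommGroup E]
    [InnerProductSpace ℝ E] [FiniteDimensional ℝ E] (A : ℂ ≃ₗᵢ[ℝ] E) (f : E → F) (x : E) :
    Δ f x = fderiv ℝ (fderiv ℝ f) x (A 1) (A 1) + fderiv ℝ (fderiv ℝ f) x (A I) (A I) := by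
  rw [laplacian_eq_iteratedFDeriv_orthonormalBasis f (Complex.orthonormalBasisOneI.map A)]
  simp [iteratedFDeriv_two_apply]

lemma laplacian_eq_circleMap (v : ℂ → F) (y : ℂ) (θ : ℝ) :
    Δ v y = fderiv ℝ (fderiv ℝ v) y (circleMap 0 1 θ) (circleMap 0 1 θ)
      + fderiv ℝ (fderiv ℝ v) y (circleMap 0 1 θ * I) (circleMap 0 1 θ * I) := by
  simpa [circleMap_zero, rotation_apply]
    using laplacian_eq_of_linearIsometryEquiv (rotation (Circle.exp θ)) v y

lemma continuous_laplacian {v : ℂ → F} (hv : ContDiff ℝ 2 v) : Continuous (Δ v) := by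
  have := (hv.fderiv_right (m := 1) le_rfl).continuous_fderiv one_ne_zero
  simp only [funext fun y => laplacian_eq_circleMap v y 0]
  fun_prop

variable {v : ℂ → F}

lemma hasDerivAt_circleAverage (hv : ContDiff ℝ 1 v) (x : ℂ) (r : ℝ) :
    HasDerivAt (circleAverage v x)
      ((2 * π)⁻¹ • ∫ θ in 0..2 * π, fderiv ℝ v (circleMap x r θ) (circleMap 0 1 θ)) r := by
  have := hv.continuous
  have := hv.continuous_fderiv one_ne_zero
  refine (hasDerivAt_intervalIntegral_of_continuous (f := fun r θ => v (circleMap x r θ))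
    (f' := fun r θ => fderiv ℝ v (circleMap x r θ) (circleMap 0 1 θ)) ?_ ?_ ?_ r).const_smul _
  · unfold Function.uncurry
    fun_prop
  · unfold Function.uncurry
    fun_prop
  · exact fun r θ => (hv.differentiable one_ne_zero _).hasFDerivAt.comp_hasDerivAt r
      (hasDerivAt_circleMap_radius x r θ)

lemma deriv_circleAverage (hv : ContDiff ℝ 1 v) (x : ℂ) (r : ℝ) :
    deriv (circleAverage v x) r
      = (2 * π)⁻¹ • ∫ θ in 0..2 * π, fderiv ℝ v (circleMap x r θ) (circleMap 0 1 θ) :=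
  (hasDerivAt_circleAverage hv x r).deriv

lemma deriv_circleAverage_eq_circleAverage (hv : ContDiff ℝ 1 v) (x : ℂ) {r : ℝ} (hr : 0 < r) :
    deriv (circleAverage v x) r
      = circleAverage (fun y => fderiv ℝ v y (‖y - x‖⁻¹ • (y - x))) x r := by
  rw [deriv_circleAverage hv, circleAverage]
  congr 1
  refine intervalIntegral.integral_congr fun θ _ => ?_
  simp only [circleMap_sub_center, norm_circleMap_zero, abs_of_pos hr]
  rw [circleMap_eq_add_smul 0 r, zero_add, inv_smul_smul₀ hr.ne']

lemma hasDerivAt_deriv_circleAverage (hv : ContDiff ℝ 2 v) (x : ℂ) (r : ℝ) :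
    HasDerivAt (deriv (circleAverage v x)) ((2 * π)⁻¹ • ∫ θ in 0..2 * π,
      fderiv ℝ (fderiv ℝ v) (circleMap x r θ) (circleMap 0 1 θ) (circleMap 0 1 θ)) r := by
  have hv₁ : ContDiff ℝ 1 (fderiv ℝ v) := hv.fderiv_right le_rfl
  have := hv₁.continuous
  have := hv₁.continuous_fderiv one_ne_zero
  rw [funext (deriv_circleAverage (hv.of_le one_le_two) x)]
  refine (hasDerivAt_intervalIntegral_of_continuous
    (f := fun r θ => fderiv ℝ v (circleMap x r θ) (circleMap 0 1 θ))
    (f' := fun r θ => fderiv ℝ (fderiv ℝ v) (circleMap x r θ) (circleMap 0 1 θ) (circleMap 0 1 θ))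
    ?_ ?_ ?_ r).const_smul _
  · unfold Function.uncurry
    fun_prop
  · unfold Function.uncurry
    fun_prop
  · intro r θ
    have := (hv₁.differentiable one_ne_zero _).hasFDerivAt.comp_hasDerivAt r
      (hasDerivAt_circleMap_radius x r θ)
    exact (this.clm_apply (hasDerivAt_const r (circleMap 0 1 θ))).congr_deriv (by simp)

variable [CompleteSpace F]

-- Integration by parts along the circle.
lemma smul_integral_fderiv_fderiv_tangential (hv : ContDiff ℝ 2 v) (x : ℂ) (r : ℝ) :
    r • (2 * π)⁻¹ • ∫ θ in 0..2 * π, fderiv ℝ (fderiv ℝ v) (circleMap x r θ)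
      (circleMap 0 1 θ * I) (circleMap 0 1 θ * I) = deriv (circleAverage v x) r := by
  have hv₁ : ContDiff ℝ 1 (fderiv ℝ v) := hv.fderiv_right le_rfl
  have := hv₁.continuous
  have := hv₁.continuous_fderiv one_ne_zero
  set tangential : ℝ → F := fun θ => r • fderiv ℝ (fderiv ℝ v) (circleMap x r θ)
    (circleMap 0 1 θ * I) (circleMap 0 1 θ * I)
  set radial : ℝ → F := fun θ => fderiv ℝ v (circleMap x r θ) (circleMap 0 1 θ)
  have hd (θ : ℝ) : HasDerivAt (fun θ => fderiv ℝ v (circleMap x r θ) (circleMap 0 1 θ * I))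
      (tangential θ - radial θ) θ := by
    have := (hv₁.differentiable one_ne_zero _).hasFDerivAt.comp_hasDerivAt θ
      (hasDerivAt_circleMap x r θ)
    refine (this.clm_apply ((hasDerivAt_circleMap 0 1 θ).mul_const I)).congr_deriv ?_
    rw [circleMap_eq_add_smul 0 r, zero_add, smul_mul_assoc, mul_assoc _ I I, Complex.I_mul_I,
      mul_neg_one, map_neg, map_smul, smul_apply, sub_eq_add_neg]
    rfl
  have ht : Continuous tangential := by fun_prop
  have hr : Continuous radial := by fun_prop
  have hper := intervalIntegral.integral_eq_sub_of_hasDerivAt (a := 0) (b := 2 * π)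
    (fun θ _ => hd θ) ((ht.sub hr).intervalIntegrable _ _)
  rw [intervalIntegral.integral_sub (ht.intervalIntegrable _ _) (hr.intervalIntegrable _ _),
    (periodic_circleMap x r).eq, (periodic_circleMap 0 1).eq, sub_self, sub_eq_zero,
    intervalIntegral.integral_smul] at hper
  rw [deriv_circleAverage (hv.of_le one_le_two), smul_comm, hper]

-- The Euler–Poisson–Darboux equation.
lemma hasDerivAt_smul_deriv_circleAverage (hv : ContDiff ℝ 2 v) (x : ℂ) (r : ℝ) :
    HasDerivAt (fun r => r • deriv (circleAverage v x) r) (r • circleAverage (Δ v) x r) r := by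
  have :=
    (hv.fderiv_right (m := 1) le_rfl).continuous_fderiv one_ne_zero
  have hr : Continuous fun θ : ℝ => fderiv ℝ (fderiv ℝ v) (circleMap x r θ)
    (circleMap 0 1 θ) (circleMap 0 1 θ) := by fun_prop
  have ht : Continuous fun θ : ℝ => fderiv ℝ (fderiv ℝ v) (circleMap x r θ)
    (circleMap 0 1 θ * I) (circleMap 0 1 θ * I) := by fun_prop
  refine ((hasDerivAt_id r).smul (hasDerivAt_deriv_circleAverage hv x r)).congr_deriv ?_
  rw [id, one_smul, ← smul_integral_fderiv_fderiv_tangential hv x r, ← smul_add, ← smul_add,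
    ← intervalIntegral.integral_add (hr.intervalIntegrable _ _) (ht.intervalIntegrable _ _)]
  simp only [circleAverage, fun θ => laplacian_eq_circleMap v (circleMap x r θ) θ]

end

section

variable {F : Type*} [NormedAddCommGroup F] [NormedSpace ℝ F] {f : ℂ → F}

lemma circleAverage_eq_integral_Ioo (f : ℂ → F) (x : ℂ) (r : ℝ) :
    circleAverage f x r = (2 * π)⁻¹ • ∫ θ in Ioo (-π) π, f (circleMap x r θ) := by
  have hper : Function.Periodic (fun θ => f (circleMap x r θ)) (2 * π) := fun θ => by
    simp only [periodic_circleMap x r θ]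
  have hshift := hper.intervalIntegral_add_eq 0 (-π)
  rw [zero_add, show -π + 2 * π = π by ring] at hshift
  rw [circleAverage, hshift, intervalIntegral.integral_of_le (by linarith [pi_pos]),
    integral_Ioc_eq_integral_Ioo]

lemma integrableOn_smul_comp_circleMap (hf : Continuous f) (hs : HasCompactSupport f) (x : ℂ) :
    IntegrableOn (fun p : ℝ × ℝ => p.1 • f (circleMap x p.1 p.2)) (Ioi 0 ×ˢ Ioo (-π) π) := by
  obtain ⟨B, hB⟩ := hs.isCompact.isBounded.subset_closedBall x
  have hcont : Continuous fun p : ℝ × ℝ => p.1 • f (circleMap x p.1 p.2) := by fun_prop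
  have hinside : IntegrableOn (fun p : ℝ × ℝ => p.1 • f (circleMap x p.1 p.2))
      (Icc 0 B ×ˢ Icc (-π) π) :=
    hcont.continuousOn.integrableOn_compact (isCompact_Icc.prod isCompact_Icc)
  refine hinside.of_forall_sdiff_eq_zero (measurableSet_Ioi.prod measurableSet_Ioo) ?_
  rintro ⟨r, θ⟩ ⟨⟨hr, hθ⟩, hnot⟩
  have hr0 : 0 ≤ r := le_of_lt hr
  have hzero : f (circleMap x r θ) = 0 := image_eq_zero_of_notMem_tsupport fun hmem =>
    hnot ⟨⟨hr0, by simpa [dist_eq_norm, abs_of_nonneg hr0] using hB hmem⟩, Ioo_subset_Icc_self hθ⟩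
  simp [hzero]

lemma integrableOn_smul_circleAverage (hf : Continuous f) (hs : HasCompactSupport f) (x : ℂ) :
    IntegrableOn (fun r : ℝ => r • circleAverage f x r) (Ioi 0) := by
  have hint := integrableOn_smul_comp_circleMap hf hs x
  rw [IntegrableOn, Measure.volume_eq_prod, ← Measure.prod_restrict] at hint
  refine (hint.integral_prod_left.smul ((2 * π)⁻¹ : ℝ)).congr
    (Eventually.of_forall fun r => ?_)
  simp only [Pi.smul_apply, circleAverage_eq_integral_Ioo, integral_smul]
  rw [smul_comm]

lemma integral_eq_integral_circleAverage (hf : Continuous f) (hs : HasCompactSupport f) (x : ℂ) :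
    ∫ y, f y = (2 * π) • ∫ r in Ioi (0 : ℝ), r • circleAverage f x r := by
  have hpolar (p : ℝ × ℝ) : x + Complex.polarCoord.symm p = circleMap x p.1 p.2 := by
    rw [Complex.polarCoord_symm_apply, circleMap, Complex.exp_mul_I, Complex.ofReal_cos,
      Complex.ofReal_sin]
  have hint := integrableOn_smul_comp_circleMap hf hs x
  rw [← integral_add_left_eq_self f x, ← Complex.integral_comp_polarCoord_symm]
  simp only [hpolar, polarCoord_target]
  rw [Measure.volume_eq_prod] at hint ⊢
  rw [setIntegral_prod _ hint, ← integral_smul]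
  refine integral_congr_ae (Eventually.of_forall fun r => ?_)
  simp only [circleAverage_eq_integral_Ioo, integral_smul]
  rw [smul_comm r, smul_inv_smul₀ (by positivity)]

end
section

variable {v : ℂ → ℂ}

lemma hasDerivAt_radial_wronskian (hv : ContDiff ℝ 2 v) (x : ℂ) {E E' : ℝ → ℂ} {q : ℂ} {r : ℝ}
    (hE : HasDerivAt E (E' r) r) (hE' : HasDerivAt (fun r : ℝ => r * E' r) (r * q) r) :
    HasDerivAt (fun r : ℝ => r * (deriv (circleAverage v x) r * E r - circleAverage v x r * E' r))
      (r * (E r * circleAverage (Δ v) x r - circleAverage v x r * q)) r := by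
  have hflux := hasDerivAt_smul_deriv_circleAverage hv x r
  have hmean := (hasDerivAt_circleAverage (hv.of_le one_le_two) x r).differentiableAt.hasDerivAt
  refine (((hflux.mul hE).sub (hmean.mul hE')).congr_of_eventuallyEq
    (Eventually.of_forall fun r => ?_)).congr_deriv ?_
  · simp only [Pi.sub_apply, Pi.mul_apply, Complex.real_smul]
    ring
  · simp only [Complex.real_smul]
    ring

lemma tendsto_radial_wronskian_nhdsGT_zero (hv : ContDiff ℝ 2 v) (x : ℂ) {E E' : ℝ → ℂ}
    (hE : Tendsto (fun r : ℝ => r * E r) (𝓝[>] 0) (𝓝 0))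
    (hE' : Tendsto (fun r : ℝ => r * E' r) (𝓝[>] 0) (𝓝 (-1))) :
    Tendsto (fun r : ℝ => r * (deriv (circleAverage v x) r * E r - circleAverage v x r * E' r))
      (𝓝[>] 0) (𝓝 (v x)) := by
  have hflux := (hasDerivAt_deriv_circleAverage hv x 0).continuousAt.tendsto.mono_left
    (nhdsWithin_le_nhds (s := Ioi 0))
  have hmean := (hasDerivAt_circleAverage (hv.of_le one_le_two) x 0).continuousAt.tendsto.mono_left
    (nhdsWithin_le_nhds (s := Ioi 0))
  have hlim := (hflux.mul hE).sub (hmean.mul hE')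
  rw [circleAverage_zero, mul_zero, mul_neg_one, sub_neg_eq_add, zero_add] at hlim
  exact hlim.congr fun r => by ring

lemma circleAverage_radial_mul_sub (hv : ContDiff ℝ 2 v) (x : ℂ) (E q : ℝ → ℂ) {r : ℝ}
    (hr : 0 ≤ r) :
    circleAverage (fun y => E ‖y - x‖ * Δ v y - v y * q ‖y - x‖) x r
      = E r * circleAverage (Δ v) x r - circleAverage v x r * q r := by
  have hcongr : EqOn (fun y => E ‖y - x‖ * Δ v y - v y * q ‖y - x‖)
      (fun y => E r • Δ v y - q r • v y) (Metric.sphere x |r|) := fun y hy => by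
    rw [mem_sphere_iff_norm, abs_of_nonneg hr] at hy
    simp only [hy, smul_eq_mul, mul_comm]
  have hΔ : CircleIntegrable (Δ v) x r := (continuous_laplacian hv).continuousOn.circleIntegrable'
  have hv' : CircleIntegrable v x r := hv.continuous.continuousOn.circleIntegrable'
  rw [circleAverage_congr_sphere hcongr, circleAverage_fun_sub hΔ.const_fun_smul hv'.const_fun_smul,
    circleAverage_fun_smul, circleAverage_fun_smul, smul_eq_mul, smul_eq_mul, mul_comm (q r)]

-- Green's second identity for `v` and the radial function `E`, whose Laplacian is `q`; both limits
-- at the origin express that `E` has the logarithmic singularity `-log r`.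
lemma integral_eq_of_radial_fundamental (hv : ContDiff ℝ 2 v) (x : ℂ) {E E' q : ℝ → ℂ}
    (hE : ∀ r > 0, HasDerivAt E (E' r) r)
    (hE' : ∀ r > 0, HasDerivAt (fun r : ℝ => r * E' r) (r * q r) r)
    (hE₀ : Tendsto (fun r : ℝ => r * E r) (𝓝[>] 0) (𝓝 0))
    (hE₀' : Tendsto (fun r : ℝ => r * E' r) (𝓝[>] 0) (𝓝 (-1)))
    (hinf : Tendsto (fun r : ℝ => r * (deriv (circleAverage v x) r * E r
      - circleAverage v x r * E' r)) atTop (𝓝 0))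
    (hcont : Continuous fun y => E ‖y - x‖ * Δ v y - v y * q ‖y - x‖)
    (hsupp : HasCompactSupport fun y => E ‖y - x‖ * Δ v y - v y * q ‖y - x‖) :
    ∫ y, (E ‖y - x‖ * Δ v y - v y * q ‖y - x‖) = -(2 * π * v x) := by
  have hderiv (r : ℝ) (hr : r ∈ Ioi (0 : ℝ)) :=
    hasDerivAt_radial_wronskian hv x (hE r hr) (hE' r hr)
  have hint : IntegrableOn (fun r : ℝ => (r : ℂ) * (E r * circleAverage (Δ v) x r
      - circleAverage v x r * q r)) (Ioi 0) :=
    (integrableOn_smul_circleAverage hcont hsupp x).congr_fun (fun r hr => by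
      simp only [circleAverage_radial_mul_sub hv x E q (le_of_lt hr), Complex.real_smul])
      measurableSet_Ioi
  have hftc := integral_Ioi_deriv_mul_eq_sub (u := fun _ => (1 : ℂ)) (u' := fun _ => 0)
    (fun r _ => hasDerivAt_const r 1) hderiv
    (by simpa only [zero_mul, zero_add, one_mul, Pi.mul_def, Pi.add_def] using hint)
    (by simpa only [one_mul, Pi.mul_def] using tendsto_radial_wronskian_nhdsGT_zero hv x hE₀ hE₀')
    (by simpa only [one_mul, Pi.mul_def] using hinf)
  simp only [zero_mul, one_mul, zero_add, zero_sub] at hftc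
  rw [integral_eq_integral_circleAverage hcont hsupp x, setIntegral_congr_fun measurableSet_Ioi
    (fun r hr => by
      rw [circleAverage_radial_mul_sub hv x E q (le_of_lt hr), Complex.real_smul]), hftc,
    Complex.real_smul]
  push_cast
  ring

end

/-! ### The interior gradient estimate -/

/-- A smooth cutoff of the radial variable, equal to one on `(-∞, 1/2]` and to zero on `[1, ∞)`. -/
def radialCutoff (r : ℝ) : ℝ := Real.smoothTransition (2 - 2 * r)

lemma contDiff_radialCutoff {n : ℕ∞} : ContDiff ℝ n radialCutoff :=
  Real.smoothTransition.contDiff.comp (by fun_prop)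

lemma radialCutoff_of_le {r : ℝ} (hr : r ≤ 1 / 2) : radialCutoff r = 1 :=
  Real.smoothTransition.one_of_one_le (by linarith)

lemma radialCutoff_of_ge {r : ℝ} (hr : 1 ≤ r) : radialCutoff r = 0 :=
  Real.smoothTransition.zero_of_nonpos (by linarith)

lemma deriv_radialCutoff_eventuallyEq_zero {r : ℝ} (hr : r < 1 / 2 ∨ 1 < r) :
    deriv radialCutoff =ᶠ[𝓝 r] 0 := by
  obtain ⟨c, hc⟩ : ∃ c, radialCutoff =ᶠ[𝓝 r] fun _ => c := by
    rcases hr with hr | hr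
    · exact ⟨1, (eventually_lt_nhds hr).mono fun s hs => radialCutoff_of_le hs.le⟩
    · exact ⟨0, (eventually_gt_nhds hr).mono fun s hs => radialCutoff_of_ge hs.le⟩
  exact hc.deriv.trans (by simp [Pi.zero_def])

lemma deriv_radialCutoff_eq_zero {r : ℝ} (hr : r < 1 / 2 ∨ 1 < r) : deriv radialCutoff r = 0 :=
  (deriv_radialCutoff_eventuallyEq_zero hr).eq_of_nhds

lemma contDiff_deriv_radialCutoff {n : ℕ} : ContDiff ℝ n (deriv radialCutoff) :=
  (contDiff_succ_iff_deriv.1 (contDiff_radialCutoff (n := (n + 1 : ℕ)))).2.2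

lemma contDiff_deriv_deriv_radialCutoff {n : ℕ} : ContDiff ℝ n (deriv (deriv radialCutoff)) :=
  (contDiff_succ_iff_deriv.1 (contDiff_deriv_radialCutoff (n := n + 1))).2.2

/-- The result of applying the radial Helmholtz operator `∂² + r⁻¹ ∂ + 1` to
`radialCutoff · hankel`. -/
def kernelProfile (r : ℝ) : ℂ :=
  (deriv (deriv radialCutoff) r : ℝ) * hankel r + 2 * (deriv radialCutoff r : ℝ) * deriv hankel r
    + (deriv radialCutoff r : ℝ) * hankel r / r

lemma kernelProfile_eq_zero {r : ℝ} (hr : r < 1 / 2 ∨ 1 < r) : kernelProfile r = 0 := by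
  simp [kernelProfile, deriv_radialCutoff_eq_zero hr,
    (deriv_radialCutoff_eventuallyEq_zero hr).deriv_eq]

lemma analyticAt_hankel {z : ℂ} (hz : 0 < z.re) : AnalyticAt ℂ hankel z :=
  Complex.analyticAt_iff_eventually_differentiableAt.2 <|
    ((isOpen_lt continuous_const Complex.continuous_re).eventually_mem hz).mono
      fun _ => differentiableAt_hankel

lemma contDiffAt_comp_ofReal {f : ℂ → ℂ} {r : ℝ} (hf : AnalyticAt ℂ f r) {n : WithTop ℕ∞} :
    ContDiffAt ℝ n (fun r : ℝ => f r) r :=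
  ((hf.restrictScalars (𝕜 := ℝ)).contDiffAt (n := n)).comp r
    Complex.ofRealCLM.contDiff.contDiffAt

lemma contDiffAt_kernelProfile {r : ℝ} (hr : 0 < r) : ContDiffAt ℝ 1 kernelProfile r := by
  have hχ' : ContDiff ℝ 1 fun r : ℝ => ((deriv radialCutoff r : ℝ) : ℂ) :=
    Complex.ofRealCLM.contDiff.comp (contDiff_deriv_radialCutoff (n := 1))
  have hχ'' : ContDiff ℝ 1 fun r : ℝ => ((deriv (deriv radialCutoff) r : ℝ) : ℂ) :=
    Complex.ofRealCLM.contDiff.comp (contDiff_deriv_deriv_radialCutoff (n := 1))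
  have hh := analyticAt_hankel (z := r) (by simpa using hr)
  have hid : ContDiffAt ℝ 1 (fun r : ℝ => (r : ℂ)) r := Complex.ofRealCLM.contDiff.contDiffAt
  have hr₀ : (r : ℂ) ≠ 0 := Complex.ofReal_ne_zero.2 hr.ne'
  unfold kernelProfile
  simp only [div_eq_mul_inv]
  exact ((hχ''.contDiffAt.mul (contDiffAt_comp_ofReal hh)).add ((contDiffAt_const.mul
    hχ'.contDiffAt).mul (contDiffAt_comp_ofReal hh.deriv))).add
    ((hχ'.contDiffAt.mul (contDiffAt_comp_ofReal hh)).mul (hid.inv hr₀))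

/-- A reproducing kernel for the solutions of `Δ v + v = 0`, up to the factor `2 * π`. -/
def helmholtzKernel (y : ℂ) : ℂ := kernelProfile ‖y‖

lemma contDiff_helmholtzKernel : ContDiff ℝ 1 helmholtzKernel := by
  refine contDiff_iff_contDiffAt.2 fun y => ?_
  rcases lt_or_ge ‖y‖ (1 / 2) with hy | hy
  · have hzero : helmholtzKernel =ᶠ[𝓝 y] fun _ => 0 :=
      (continuous_norm.continuousAt.eventually_lt_const hy).mono
        fun z hz => kernelProfile_eq_zero (Or.inl hz)
    exact contDiffAt_const.congr_of_eventuallyEq hzero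
  · have hpos : 0 < ‖y‖ := by linarith
    exact (contDiffAt_kernelProfile hpos).comp y (contDiffAt_norm ℝ (norm_pos_iff.1 hpos))

lemma helmholtzKernel_eq_zero {y : ℂ} (hy : y ∉ Metric.closedBall 0 1) : helmholtzKernel y = 0 :=
  kernelProfile_eq_zero (Or.inr (by simpa using hy))

lemma hasCompactSupport_helmholtzKernel : HasCompactSupport helmholtzKernel :=
  HasCompactSupport.intro (isCompact_closedBall 0 1) fun _ => helmholtzKernel_eq_zero

lemma integrable_mul_helmholtzKernel_sub {v : ℂ → ℂ} (hv : Continuous v) (x : ℂ) :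
    Integrable fun y => v y * helmholtzKernel (y - x) := by
  have := contDiff_helmholtzKernel.continuous
  exact Continuous.integrable_of_hasCompactSupport (by fun_prop)
    ((hasCompactSupport_helmholtzKernel.comp_homeomorph (Homeomorph.subRight x)).mul_left)

lemma hasDerivAt_ofReal_radialCutoff (r : ℝ) :
    HasDerivAt (fun r => ((radialCutoff r : ℝ) : ℂ)) (deriv radialCutoff r : ℝ) r :=
  ((contDiff_radialCutoff (n := 1)).differentiable one_ne_zero r).hasDerivAt.ofReal_comp

lemma hasDerivAt_radialCutoff_mul_hankel {r : ℝ} (hr : 0 < r) :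
    HasDerivAt (fun r : ℝ => radialCutoff r * hankel r)
      (deriv radialCutoff r * hankel r + radialCutoff r * deriv hankel r) r :=
  (hasDerivAt_ofReal_radialCutoff r).mul
    (differentiableAt_hankel (by simpa using hr)).hasDerivAt.comp_ofReal

lemma hasDerivAt_mul_deriv_radialCutoff_mul_hankel {r : ℝ} (hr : 0 < r) :
    HasDerivAt (fun r : ℝ =>
        r * (deriv radialCutoff r * hankel r + radialCutoff r * deriv hankel r))
      (r * (kernelProfile r - radialCutoff r * hankel r)) r := by
  have hre : 0 < (r : ℂ).re := by simpa using hr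
  have hχ' : HasDerivAt (fun r => ((deriv radialCutoff r : ℝ) : ℂ))
      (deriv (deriv radialCutoff) r : ℝ) r :=
    ((contDiff_deriv_radialCutoff (n := 1)).differentiable one_ne_zero r).hasDerivAt.ofReal_comp
  have hχ'h := hχ'.mul (differentiableAt_hankel hre).hasDerivAt.comp_ofReal
  have hχrh' := (hasDerivAt_ofReal_radialCutoff r).mul (hasDerivAt_mul_deriv_hankel hre).comp_ofReal
  refine ((((hasDerivAt_id (r : ℂ)).comp_ofReal.mul hχ'h).add hχrh').congr_of_eventuallyEq
    (Eventually.of_forall fun s => ?_)).congr_deriv ?_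
  · simp only [Pi.add_apply, Pi.mul_apply, id]
    ring
  · have hr₀ : (r : ℂ) ≠ 0 := Complex.ofReal_ne_zero.2 hr.ne'
    simp only [kernelProfile, Pi.mul_apply, id]
    field_simp
    ring

lemma integral_mul_helmholtzKernel_sub {v : ℂ → ℂ} (hv : ContDiff ℝ 2 v) {x : ℂ}
    (hx : ∀ y ∈ Metric.closedBall x 1, Δ v y + v y = 0) :
    ∫ y, v y * helmholtzKernel (y - x) = 2 * π * v x := by
  have hkernel : (fun y => radialCutoff ‖y - x‖ * hankel ‖y - x‖ * Δ v y
      - v y * (kernelProfile ‖y - x‖ - radialCutoff ‖y - x‖ * hankel ‖y - x‖))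
      = fun y => -(v y * helmholtzKernel (y - x)) := by
    ext y
    by_cases hy : y ∈ Metric.closedBall x 1
    · rw [helmholtzKernel, eq_neg_of_add_eq_zero_left (hx y hy)]
      ring
    · rw [mem_closedBall_iff_norm, not_le] at hy
      simp [helmholtzKernel, radialCutoff_of_ge hy.le]
  have hnear : ∀ᶠ r : ℝ in 𝓝[>] 0, radialCutoff r = 1 ∧ deriv radialCutoff r = 0 := by
    filter_upwards [nhdsWithin_le_nhds (eventually_lt_nhds one_half_pos)] with r hr
    exact ⟨radialCutoff_of_le hr.le, deriv_radialCutoff_eq_zero (Or.inl hr)⟩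
  have hfar : ∀ᶠ r : ℝ in atTop, radialCutoff r = 0 ∧ deriv radialCutoff r = 0 := by
    filter_upwards [eventually_gt_atTop 1] with r hr
    exact ⟨radialCutoff_of_ge hr.le, deriv_radialCutoff_eq_zero (Or.inr hr)⟩
  have hv₀ := hv.continuous
  have hK := contDiff_helmholtzKernel.continuous
  have hgreen := integral_eq_of_radial_fundamental hv x
    (fun r => hasDerivAt_radialCutoff_mul_hankel)
    (fun r => hasDerivAt_mul_deriv_radialCutoff_mul_hankel)
    (tendsto_mul_hankel_nhdsGT_zero.congr' (hnear.mono fun r hr => by simp [hr]))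
    (tendsto_mul_deriv_hankel_nhdsGT_zero.congr' (hnear.mono fun r hr => by simp [hr]))
    (tendsto_const_nhds.congr' (hfar.mono fun r hr => by simp [hr]))
    (by rw [hkernel]; fun_prop)
    (by
      rw [hkernel]
      exact ((hasCompactSupport_helmholtzKernel.comp_homeomorph
        (Homeomorph.subRight x)).mul_left (f := v)).neg)
  rwa [hkernel, integral_neg, neg_inj] at hgreen

lemma norm_integral_mul_helmholtzKernel_sub_sub_le {v : ℂ → ℂ} (hv : Continuous v) {x z : ℂ}
    {M : ℝ} (hM : ∀ y ∈ Metric.closedBall x 2, ‖v y‖ ≤ M) (hz : z ∈ Metric.ball x 1) {C : NNReal}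
    (hC : LipschitzWith C helmholtzKernel) :
    ‖(∫ y, v y * helmholtzKernel (y - z)) - ∫ y, v y * helmholtzKernel (y - x)‖
      ≤ M * (C * ‖z - x‖) * volume.real (Metric.closedBall (0 : ℂ) 2) := by
  have hball : ∀ w ∈ Metric.ball x 1, ∀ y ∉ Metric.closedBall x 2,
      helmholtzKernel (y - w) = 0 := fun w hw y hy => helmholtzKernel_eq_zero fun hmem => hy <| by
    rw [mem_closedBall_zero_iff, ← dist_eq_norm] at hmem
    rw [Metric.mem_ball] at hw
    rw [Metric.mem_closedBall]
    linarith [dist_triangle y w x]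
  rw [← integral_sub (integrable_mul_helmholtzKernel_sub hv z)
    (integrable_mul_helmholtzKernel_sub hv x), Measure.real,
    ← Measure.addHaar_closedBall_center volume x, ← Measure.real,
    ← setIntegral_eq_integral_of_forall_compl_eq_zero (s := Metric.closedBall x 2)]
  · refine norm_setIntegral_le_of_norm_le_const measure_closedBall_lt_top fun y hy => ?_
    have hlip := hC.norm_sub_le (y - z) (y - x)
    rw [sub_sub_sub_cancel_left, norm_sub_rev x z] at hlip
    rw [← mul_sub, norm_mul]
    have := (norm_nonneg _).trans (hM y hy)
    gcongr
    exact hM y hy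
  · intro y hy
    rw [hball z hz y hy, hball x (Metric.mem_ball_self one_pos) y hy, sub_self]

lemma exists_norm_fderiv_le : ∃ C : ℝ, ∀ v : ℂ → ℂ, ContDiff ℝ 2 v → ∀ (x : ℂ) (M : ℝ),
    (∀ y ∈ Metric.closedBall x 2, Δ v y + v y = 0) →
    (∀ y ∈ Metric.closedBall x 2, ‖v y‖ ≤ M) → ‖fderiv ℝ v x‖ ≤ C * M := by
  obtain ⟨C, hC⟩ := contDiff_helmholtzKernel.lipschitzWith_of_hasCompactSupport
    hasCompactSupport_helmholtzKernel one_ne_zero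
  refine ⟨C * volume.real (Metric.closedBall (0 : ℂ) 2), fun v hv x M hx hM => ?_⟩
  have hM₀ : 0 ≤ M := (norm_nonneg _).trans (hM x (Metric.mem_closedBall_self zero_le_two))
  refine norm_fderiv_le_of_lip' ℝ (by positivity) ?_
  filter_upwards [Metric.ball_mem_nhds x one_pos] with z hz
  have hrep : ∀ w ∈ Metric.ball x 1, ∫ y, v y * helmholtzKernel (y - w) = 2 * π * v w :=
    fun w hw => integral_mul_helmholtzKernel_sub hv fun y hy => hx y
      (Metric.closedBall_subset_closedBall' (by linarith [Metric.mem_ball.1 hw]) hy)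
  have hdiff := norm_integral_mul_helmholtzKernel_sub_sub_le hv.continuous hM hz hC
  rw [hrep z hz, hrep x (Metric.mem_ball_self one_pos), ← mul_sub, norm_mul] at hdiff
  have h2π : (1 : ℝ) ≤ ‖(2 * π : ℂ)‖ := by
    simp only [norm_mul, RCLike.norm_ofNat, Complex.norm_real, norm_of_nonneg pi_nonneg]
    linarith [pi_gt_three]
  calc ‖v z - v x‖ ≤ ‖(2 * π : ℂ)‖ * ‖v z - v x‖ := le_mul_of_one_le_left (norm_nonneg _) h2π
    _ ≤ M * (C * ‖z - x‖) * volume.real (Metric.closedBall (0 : ℂ) 2) := hdiff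
    _ = C * volume.real (Metric.closedBall (0 : ℂ) 2) * M * ‖z - x‖ := by ring
/-! ### Outgoing functions -/

section

variable {E : Type*} [NormedAddCommGroup E]

lemma isTheta_norm_sub_const_cobounded (p : E) :
    (fun y => ‖y - p‖) =Θ[cobounded E] fun y => ‖y‖ :=
  (IsEquivalent.refl.sub_isLittleO (isLittleO_const_id_cobounded p)).isTheta.norm_left.norm_right

lemma isTheta_sqrt_norm_sub_const_cobounded (p : E) :
    (fun y => √‖y - p‖) =Θ[cobounded E] fun y => √‖y‖ :=
  (isTheta_norm_sub_const_cobounded p).sqrt (Eventually.of_forall fun _ => norm_nonneg _)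
    (Eventually.of_forall fun _ => norm_nonneg _)

lemma eventually_cobounded_forall_mem_closedBall {P : E → Prop} (hP : ∀ᶠ y in cobounded E, P y)
    (r : ℝ) : ∀ᶠ y in cobounded E, ∀ z ∈ Metric.closedBall y r, P z := by
  obtain ⟨R, -, hR⟩ := (Metric.hasBasis_cobounded_compl_closedBall 0).eventually_iff.1 hP
  refine (Metric.hasBasis_cobounded_compl_closedBall 0).eventually_iff.2
    ⟨R + r, trivial, fun y hy z hz => hR fun hzR => hy ?_⟩
  rw [Metric.mem_closedBall] at hz hzR ⊢
  linarith [dist_triangle y z 0, dist_comm y z]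

variable [NormedSpace ℝ E]

lemma norm_inv_norm_smul_sub_le {a b : E} (ha : a ≠ 0) (hb : b ≠ 0) :
    ‖‖a‖⁻¹ • a - ‖b‖⁻¹ • b‖ ≤ 2 * ‖a - b‖ * ‖b‖⁻¹ := by
  have hsplit : ‖a‖⁻¹ • a - ‖b‖⁻¹ • b = (‖a‖⁻¹ - ‖b‖⁻¹) • a + ‖b‖⁻¹ • (a - b) := by module
  have hinv : ‖a‖⁻¹ - ‖b‖⁻¹ = (‖b‖ - ‖a‖) * ‖a‖⁻¹ * ‖b‖⁻¹ := by
    have := norm_ne_zero_iff.2 ha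
    have := norm_ne_zero_iff.2 hb
    field_simp
  calc ‖‖a‖⁻¹ • a - ‖b‖⁻¹ • b‖
      ≤ |‖b‖ - ‖a‖| * ‖b‖⁻¹ + ‖b‖⁻¹ * ‖a - b‖ := by
        rw [hsplit, hinv]
        refine (norm_add_le _ _).trans_eq ?_
        rw [norm_smul, norm_smul, norm_mul, norm_mul, norm_inv, norm_inv, norm_norm, norm_norm,
          mul_right_comm _ ‖a‖⁻¹, mul_assoc _ ‖a‖⁻¹, inv_mul_cancel₀ (norm_ne_zero_iff.2 ha),
          mul_one, Real.norm_eq_abs]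
    _ ≤ ‖a - b‖ * ‖b‖⁻¹ + ‖b‖⁻¹ * ‖a - b‖ := by
        gcongr
        rw [abs_sub_comm]
        exact abs_norm_sub_norm_le a b
    _ = 2 * ‖a - b‖ * ‖b‖⁻¹ := by ring

lemma isBigO_inv_norm_smul_sub_sub (x p : E) :
    (fun y => ‖y - x‖⁻¹ • (y - x) - ‖y - p‖⁻¹ • (y - p)) =O[cobounded E] fun y => ‖y‖⁻¹ := by
  refine (IsBigO.of_bound (2 * ‖p - x‖) ?_).trans (isTheta_norm_sub_const_cobounded p).inv.1
  filter_upwards [eventually_ne_cobounded x, eventually_ne_cobounded p] with y hyx hyp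
  simpa using norm_inv_norm_smul_sub_le (sub_ne_zero.2 hyx) (sub_ne_zero.2 hyp)

/-- The Sommerfeld radiation condition with unit wave number in two dimensions, for the radial
variable about `p`. -/
def IsOutgoing (v : E → ℂ) (p : E) : Prop :=
  (fun y => fderiv ℝ v y (‖y - p‖⁻¹ • (y - p)) - I * v y) =o[cobounded E] fun y => (√‖y‖)⁻¹

lemma norm_le_add_of_norm_deriv_sub_le {f f' : ℝ → ℂ} {a b δ : ℝ} (ha : 0 < a)
    (hf : ∀ t, HasDerivAt f (f' t) t) (hf' : ∀ t ∈ Ico a b, ‖f' t - I * f t‖ ≤ δ * (√t)⁻¹)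
    (hab : a ≤ b) : ‖f b‖ ≤ ‖f a‖ + 2 * δ * (√b - √a) := by
  have hexp (t : ℝ) : ‖Complex.exp (-(I * t))‖ = 1 := by simp [Complex.norm_exp]
  have hd (t : ℝ) : HasDerivAt (fun t : ℝ => Complex.exp (-(I * t)) * f t)
      (Complex.exp (-(I * t)) * (f' t - I * f t)) t := by
    have hphase : HasDerivAt (fun t : ℝ => Complex.exp (-(I * t)))
        (Complex.exp (-(I * t)) * -(I * 1)) t :=
      ((hasDerivAt_id (t : ℂ)).const_mul I).neg.cexp.comp_ofReal
    exact (hphase.mul (hf t)).congr_deriv (by ring)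
  have hbound := image_norm_le_of_norm_deriv_right_le_deriv_boundary' (a := a) (b := b)
    (B := fun t => ‖f a‖ + 2 * δ * (√t - √a)) (B' := fun t => 2 * δ * (1 / (2 * √t)))
    (fun t _ => (hd t).continuousAt.continuousWithinAt) (fun t _ => (hd t).hasDerivWithinAt)
    (by simp [hexp]) (by fun_prop)
    (fun t ht => ((((hasDerivAt_sqrt (ha.trans_le ht.1).ne').sub_const _).const_mul
      (2 * δ)).const_add _).hasDerivWithinAt)
    (fun t ht => by
      rw [norm_mul, hexp, one_mul]
      exact (hf' t ht).trans_eq (by field_simp)) ⟨hab, le_rfl⟩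
  simpa only [norm_mul, hexp, one_mul] using hbound

lemma norm_le_add_of_norm_radial_deriv_sub_le {v : E → ℂ} (hv : Differentiable ℝ v) {p : E}
    {a δ : ℝ} (ha : 0 < a) (h : ∀ y, a ≤ ‖y - p‖ →
      ‖fderiv ℝ v y (‖y - p‖⁻¹ • (y - p)) - I * v y‖ ≤ δ * (√‖y - p‖)⁻¹)
    {y : E} (hy : a ≤ ‖y - p‖) :
    ∃ z ∈ Metric.closedBall p a, ‖v y‖ ≤ ‖v z‖ + 2 * δ * (√‖y - p‖ - √a) := by
  have hy₀ : ‖y - p‖ ≠ 0 := (ha.trans_le hy).ne'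
  set ω : E := ‖y - p‖⁻¹ • (y - p) with hω
  have hω₁ : ‖ω‖ = 1 := by rw [hω, norm_smul, norm_inv, norm_norm, inv_mul_cancel₀ hy₀]
  have hnorm {t : ℝ} (ht : 0 ≤ t) : ‖p + t • ω - p‖ = t := by
    rw [add_sub_cancel_left, norm_smul, hω₁, mul_one, norm_of_nonneg ht]
  have hd (t : ℝ) : HasDerivAt (fun t : ℝ => v (p + t • ω)) (fderiv ℝ v (p + t • ω) ω) t := by
    have hray : HasDerivAt (fun t : ℝ => p + t • ω) ω t := by
      simpa using ((hasDerivAt_id t).smul_const ω).const_add p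
    exact (hv _).hasFDerivAt.comp_hasDerivAt t hray
  have hbound := norm_le_add_of_norm_deriv_sub_le ha hd (δ := δ) (fun t ht => by
    have ht₀ : 0 < t := ha.trans_le ht.1
    have := h (p + t • ω) (by rw [hnorm ht₀.le]; exact ht.1)
    rwa [hnorm ht₀.le, add_sub_cancel_left, inv_smul_smul₀ ht₀.ne'] at this) hy
  rw [hω, smul_inv_smul₀ hy₀, add_sub_cancel, ← hω] at hbound
  exact ⟨p + a • ω, by rw [mem_closedBall_iff_norm, hnorm ha.le], hbound⟩

variable {v : E → ℂ} {p : E}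

lemma IsOutgoing.isLittleO_sqrt_norm [ProperSpace E] (h : IsOutgoing v p)
    (hv : Differentiable ℝ v) : v =o[cobounded E] fun y => √‖y‖ := by
  refine IsLittleO.trans_isTheta (isLittleO_iff.2 fun ε hε => ?_)
    (isTheta_sqrt_norm_sub_const_cobounded p)
  obtain ⟨R, -, hR⟩ := (Metric.hasBasis_cobounded_compl_closedBall p).eventually_iff.1
    (isLittleO_iff.1 (h.trans_isTheta (isTheta_sqrt_norm_sub_const_cobounded p).symm.inv)
      (show 0 < ε / 3 by positivity))
  obtain ⟨M, hM⟩ := (isCompact_closedBall p (|R| + 1)).exists_bound_of_continuousOn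
    hv.continuous.continuousOn
  have hlim : Tendsto (fun y => √‖y - p‖) (cobounded E) atTop :=
    tendsto_sqrt_atTop.comp (tendsto_norm_cobounded_atTop.comp (tendsto_sub_const_cobounded p))
  filter_upwards [hlim.eventually_ge_atTop (M / (ε / 3)), (tendsto_norm_cobounded_atTop.comp
    (tendsto_sub_const_cobounded p)).eventually_ge_atTop (|R| + 1)] with y hyM hyR
  obtain ⟨z, hz, hyz⟩ := norm_le_add_of_norm_radial_deriv_sub_le hv (δ := ε / 3)
    (by positivity : 0 < |R| + 1) (fun w hw => by
      have := hR (x := w) (by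
        rw [mem_compl_iff, mem_closedBall_iff_norm, not_le]
        linarith [le_abs_self R])
      rwa [norm_inv, norm_of_nonneg (sqrt_nonneg _)] at this) hyR
  rw [div_le_iff₀ (by positivity)] at hyM
  have hsqrt : 0 ≤ ε / 3 * √(|R| + 1) := by positivity
  rw [norm_of_nonneg (sqrt_nonneg _)]
  linarith [hM z hz]

lemma IsOutgoing.of_isLittleO_fderiv (h : IsOutgoing v p)
    (hv : fderiv ℝ v =o[cobounded E] fun y => √‖y‖) (x : E) : IsOutgoing v x := by
  have hdiff : (fun y => fderiv ℝ v y (‖y - x‖⁻¹ • (y - x) - ‖y - p‖⁻¹ • (y - p)))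
      =o[cobounded E] fun y => (√‖y‖)⁻¹ := by
    refine (IsBigO.of_norm_le fun y => (fderiv ℝ v y).le_opNorm _).trans_isLittleO <|
      (hv.norm_left.mul_isBigO (isBigO_inv_norm_smul_sub_sub x p).norm_left).congr_right fun y => ?_
    rw [← div_eq_mul_inv, sqrt_div_self]
  exact (h.add hdiff).congr_left fun y => by rw [map_sub]; ring

end
section

variable {v : ℂ → ℂ}

lemma isLittleO_fderiv_sqrt_norm (hv : ContDiff ℝ 2 v)
    (hΔ : ∀ᶠ y in cobounded ℂ, Δ v y + v y = 0) (hgrowth : v =o[cobounded ℂ] fun y => √‖y‖) :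
    fderiv ℝ v =o[cobounded ℂ] fun y => √‖y‖ := by
  obtain ⟨C, hC⟩ := exists_norm_fderiv_le
  refine isLittleO_iff.2 fun ε hε => ?_
  set δ := ε / (2 * (|C| + 1)) with hδ
  have hsmall := isLittleO_iff.1 hgrowth (show 0 < δ by positivity)
  filter_upwards [eventually_cobounded_forall_mem_closedBall hΔ 2,
    eventually_cobounded_forall_mem_closedBall hsmall 2,
    tendsto_norm_cobounded_atTop.eventually_ge_atTop 1] with y hyΔ hysmall hy₁
  have hball : ∀ z ∈ Metric.closedBall y 2, ‖v z‖ ≤ δ * (2 * √‖y‖) := fun z hz => by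
    have hzy : ‖z‖ ≤ 2 ^ 2 * ‖y‖ := by
      linarith [norm_le_norm_add_norm_sub y z, mem_closedBall_iff_norm'.1 hz]
    calc ‖v z‖ ≤ δ * √‖z‖ := by simpa [norm_of_nonneg (sqrt_nonneg _)] using hysmall z hz
      _ ≤ δ * √(2 ^ 2 * ‖y‖) := by gcongr
      _ = δ * (2 * √‖y‖) := by rw [sqrt_mul (by positivity), sqrt_sq zero_le_two]
  calc ‖fderiv ℝ v y‖ ≤ C * (δ * (2 * √‖y‖)) := hC v hv y _ hyΔ hball
    _ ≤ (|C| + 1) * (δ * (2 * √‖y‖)) := by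
        gcongr
        linarith [le_abs_self C]
    _ = ε * ‖√‖y‖‖ := by
        rw [norm_of_nonneg (sqrt_nonneg _), hδ]
        field_simp

lemma isLittleO_circleAverage {f : ℂ → ℂ} {g : ℝ → ℝ} {x : ℂ}
    (h : f =o[cobounded ℂ] fun y => g ‖y - x‖) : circleAverage f x =o[atTop] g := by
  refine isLittleO_iff.2 fun ε hε => ?_
  obtain ⟨R, -, hR⟩ := (Metric.hasBasis_cobounded_compl_closedBall x).eventually_iff.1
    (isLittleO_iff.1 h hε)
  filter_upwards [eventually_gt_atTop R, eventually_ge_atTop 0] with r hrR hr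
  have hcircle (θ : ℝ) : ‖f (circleMap x r θ)‖ ≤ ε * ‖g r‖ := by
    have hnorm : ‖circleMap x r θ - x‖ = r := by simp [abs_of_nonneg hr]
    simpa only [hnorm] using hR (x := circleMap x r θ)
      (by rwa [mem_compl_iff, mem_closedBall_iff_norm, hnorm, not_le])
  calc ‖circleAverage f x r‖ ≤ |2 * π|⁻¹ * (ε * ‖g r‖ * |2 * π - 0|) := by
        rw [circleAverage, norm_smul, norm_inv, Real.norm_eq_abs]
        gcongr
        exact intervalIntegral.norm_integral_le_of_norm_le_const fun θ _ => hcircle θ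
    _ = ε * ‖g r‖ := by
        rw [sub_zero]
        field_simp

lemma IsOutgoing.isLittleO_deriv_circleAverage_sub {x : ℂ} (h : IsOutgoing v x)
    (hv : ContDiff ℝ 1 v) : (fun r => deriv (circleAverage v x) r - I * circleAverage v x r)
      =o[atTop] fun r => (√r)⁻¹ := by
  refine (isLittleO_circleAverage (g := fun r => (√r)⁻¹)
    (h.trans_isTheta (isTheta_sqrt_norm_sub_const_cobounded x).symm.inv)).congr' ?_ .rfl
  filter_upwards [eventually_gt_atTop 0] with r hr
  have hcont : ContinuousOn (fun y => fderiv ℝ v y (‖y - x‖⁻¹ • (y - x)))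
      (Metric.sphere x |r|) := by
    have := hv.continuous_fderiv one_ne_zero
    have hne : ∀ y ∈ Metric.sphere x |r|, ‖y - x‖ ≠ 0 := fun y hy => by
      rw [mem_sphere_iff_norm.1 hy, abs_of_pos hr]
      exact hr.ne'
    fun_prop (disch := assumption)
  rw [deriv_circleAverage_eq_circleAverage hv x hr, circleAverage_fun_sub hcont.circleIntegrable'
    (hv.continuous.const_mul I).continuousOn.circleIntegrable', ← smul_eq_mul,
    ← circleAverage_fun_smul]
  rfl

lemma isBigO_hankel_ofReal : (fun r : ℝ => hankel r) =O[atTop] fun r => (√r)⁻¹ := by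
  refine IsBigO.of_bound √π ?_
  filter_upwards [eventually_gt_atTop 0] with r hr
  rw [norm_inv, norm_of_nonneg (sqrt_nonneg r), ← div_eq_mul_inv, ← sqrt_div' _ hr.le]
  exact norm_hankel_ofReal_le hr

lemma isBigO_deriv_hankel_sub_ofReal :
    (fun r : ℝ => deriv hankel r - I * hankel r) =O[atTop] fun r => (√r)⁻¹ * r⁻¹ := by
  refine IsBigO.of_bound √π ?_
  filter_upwards [eventually_gt_atTop 0] with r hr
  rw [norm_of_nonneg (by positivity), ← mul_assoc, ← div_eq_mul_inv √π, ← sqrt_div' _ hr.le]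
  refine (norm_deriv_hankel_sub_le hr).trans ?_
  rw [div_eq_mul_inv]
  gcongr
  linarith

lemma IsOutgoing.tendsto_radial_wronskian_atTop {x : ℂ} (h : IsOutgoing v x) (hv : ContDiff ℝ 1 v) :
    Tendsto (fun r : ℝ => r * (deriv (circleAverage v x) r * hankel r
      - circleAverage v x r * deriv hankel r)) atTop (𝓝 0) := by
  have hmean : circleAverage v x =o[atTop] fun r => √r :=
    isLittleO_circleAverage (g := fun r => √r) <|
      (h.isLittleO_sqrt_norm (hv.differentiable one_ne_zero)).trans_isTheta
        (isTheta_sqrt_norm_sub_const_cobounded x).symm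
  have hflux : (fun r => (deriv (circleAverage v x) r - I * circleAverage v x r) * hankel r)
      =o[atTop] fun r => r⁻¹ :=
    ((h.isLittleO_deriv_circleAverage_sub hv).mul_isBigO isBigO_hankel_ofReal).trans_eventuallyEq <|
      (eventually_ge_atTop 0).mono fun r hr => by
        simp only
        rw [← mul_inv, mul_self_sqrt hr]
  have hrest : (fun r : ℝ => circleAverage v x r * (deriv hankel r - I * hankel r))
      =o[atTop] fun r => r⁻¹ :=
    (hmean.mul_isBigO isBigO_deriv_hankel_sub_ofReal).trans_eventuallyEq <|
      (eventually_gt_atTop 0).mono fun r hr => by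
        simp only
        rw [mul_inv_cancel_left₀ (sqrt_pos.2 hr).ne']
  have hid : (fun r : ℝ => (r : ℂ)) =O[atTop] fun r => r := isBigO_of_le _ fun r => by simp
  refine (isLittleO_one_iff ℝ).1 (((hid.mul_isLittleO (hflux.sub hrest)).congr_left fun r => by
    ring).trans_eventuallyEq ?_)
  filter_upwards [eventually_ne_atTop 0] with r hr using mul_inv_cancel₀ hr

lemma continuous_mul_comp_norm_sub {h : ℂ → ℂ} (hh : ∀ r : ℝ, 0 < r → ContinuousAt h r)
    {g : ℂ → ℂ} (hg : Continuous g) {x : ℂ} (hx : x ∉ tsupport g) :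
    Continuous fun y => h ‖y - x‖ * g y := by
  refine continuous_iff_continuousAt.2 fun y => ?_
  rcases eq_or_ne y x with rfl | hyx
  · have hzero : (fun z => h ‖z - y‖ * g z) =ᶠ[𝓝 y] fun _ => 0 :=
      (notMem_tsupport_iff_eventuallyEq.1 hx).mono fun z hz => by simp [hz]
    exact continuousAt_const.congr hzero.symm
  · have hcont : ContinuousAt (fun y : ℂ => h (‖y - x‖ : ℝ)) y :=
      ContinuousAt.comp (g := h) (hh _ (norm_pos_iff.2 (sub_ne_zero.2 hyx)))
        (f := fun y => ((‖y - x‖ : ℝ) : ℂ)) (by fun_prop)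
    exact hcont.mul hg.continuousAt

lemma IsOutgoing.integral_hankel_mul {p : ℂ} (h : IsOutgoing v p) (hv : ContDiff ℝ 2 v)
    (hs : HasCompactSupport fun y => Δ v y + v y) {x : ℂ}
    (hx : x ∉ tsupport fun y => Δ v y + v y) :
    ∫ y, hankel ‖y - x‖ * (Δ v y + v y) = -(2 * π * v x) := by
  have hΔ : ∀ᶠ y in cobounded ℂ, Δ v y + v y = 0 := by
    rw [Metric.cobounded_eq_cocompact, ← coclosedCompact_eq_cocompact]
    exact hasCompactSupport_iff_eventuallyEq.1 hs
  have hout : IsOutgoing v x := h.of_isLittleO_fderiv (isLittleO_fderiv_sqrt_norm hv hΔ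
    (h.isLittleO_sqrt_norm (hv.differentiable two_ne_zero))) x
  have hre {r : ℝ} (hr : 0 < r) : 0 < (r : ℂ).re := by simpa using hr
  have hgreen : (fun y => hankel ‖y - x‖ * (Δ v y + v y))
      = fun y => hankel ‖y - x‖ * Δ v y - v y * -hankel ‖y - x‖ := by
    ext y
    ring
  rw [hgreen]
  refine integral_eq_of_radial_fundamental hv x (E' := fun r => deriv hankel r)
    (q := fun r => -hankel r)
    (fun r hr => (differentiableAt_hankel (hre hr)).hasDerivAt.comp_ofReal)
    (fun r hr => (hasDerivAt_mul_deriv_hankel (hre hr)).comp_ofReal.congr_deriv (by ring))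
    tendsto_mul_hankel_nhdsGT_zero tendsto_mul_deriv_hankel_nhdsGT_zero
    (hout.tendsto_radial_wronskian_atTop (hv.of_le one_le_two)) ?_ ?_
  · rw [← hgreen]
    exact continuous_mul_comp_norm_sub (fun r hr => (differentiableAt_hankel (hre hr)).continuousAt)
      ((continuous_laplacian hv).add hv.continuous) hx
  · rw [← hgreen]
    exact hs.mul_left

end
/-! ### Rigidity of exponentially decaying holomorphic functions -/

-- On `0 ≤ re z` the factor `arg (1 + z)` lies in `[-π / 2, π / 2]`, which costs at most
-- `exp (c |im z|)`, while `log ‖1 + z‖` gains superexponential decay along the real axis.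
lemma norm_exp_neg_mul_log_one_add_le {c : ℝ} (hc : 0 ≤ c) {z : ℂ} (hz : 0 ≤ z.re) :
    ‖Complex.exp (-((2 * c / π : ℝ) * (z * Complex.log (1 + z))))‖
      ≤ rexp (c * |z.im| - 2 * c / π * (z.re * Real.log (1 + z.re))) := by
  have harg : z.im * Complex.arg (1 + z) ≤ |z.im| * (π / 2) := by
    have : |Complex.arg (1 + z)| ≤ π / 2 := by
      rw [Complex.abs_arg_le_pi_div_two_iff, Complex.add_re, Complex.one_re]
      positivity
    calc z.im * Complex.arg (1 + z) ≤ |z.im| * |Complex.arg (1 + z)| :=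
          (le_abs_self _).trans_eq (abs_mul _ _)
      _ ≤ |z.im| * (π / 2) := by gcongr
  have hlog : Real.log (1 + z.re) ≤ Real.log ‖1 + z‖ :=
    Real.log_le_log (by positivity) (by simpa using Complex.re_le_norm (1 + z))
  rw [Complex.norm_exp, Complex.neg_re, Complex.re_ofReal_mul, Complex.mul_re, Complex.log_re,
    Complex.log_im, Real.exp_le_exp]
  calc -(2 * c / π * (z.re * Real.log ‖1 + z‖ - z.im * Complex.arg (1 + z)))
      ≤ -(2 * c / π * (z.re * Real.log (1 + z.re) - |z.im| * (π / 2))) := by gcongr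
    _ = c * |z.im| - 2 * c / π * (z.re * Real.log (1 + z.re)) := by
        field_simp
        ring

lemma differentiableOn_exp_neg_mul_log_one_add (a : ℂ) :
    DifferentiableOn ℂ (fun z => Complex.exp (-(a * (z * Complex.log (1 + z)))))
      {z | 0 ≤ z.re} := by
  intro z hz
  have hmem : 1 + z ∈ Complex.slitPlane := Or.inl <| by
    rw [Complex.add_re, Complex.one_re]
    exact add_pos_of_pos_of_nonneg one_pos hz
  have hlog : DifferentiableAt ℂ (fun z => Complex.log (1 + z)) z :=
    (differentiableAt_id.const_add 1).clog hmem
  exact ((differentiableAt_id.mul hlog).const_mul a).neg.cexp.differentiableWithinAt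

lemma tendsto_exp_pow_mul_exp_neg_mul_log {a : ℝ} (ha : 0 < a) (n : ℕ) :
    Tendsto (fun x : ℝ => rexp x ^ n * rexp (-(a * (x * Real.log (1 + x))))) atTop (𝓝 0) := by
  have hexponent : Tendsto (fun x : ℝ => x * (a * Real.log (1 + x) - n)) atTop atTop := by
    refine tendsto_id.atTop_mul_atTop₀ (tendsto_atTop_add_const_right _ _ ?_)
    refine (Real.tendsto_log_atTop.comp ?_).const_mul_atTop ha
    exact tendsto_atTop_add_const_left _ _ tendsto_id
  refine (Real.tendsto_exp_neg_atTop_nhds_zero.comp hexponent).congr fun x => ?_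
  rw [Function.comp_apply, ← Real.exp_nat_mul, ← Real.exp_add]
  ring_nf

theorem eqOn_zero_of_norm_le_exp_neg_abs_im {E : Type*} [NormedAddCommGroup E] [NormedSpace ℂ E]
    {f : ℂ → E} {c C : ℝ} (hc : 0 < c) (hf : DiffContOnCl ℂ f {z | 0 < z.re})
    (hC : ∀ z : ℂ, 0 ≤ z.re → ‖f z‖ ≤ C * rexp (-(c * |z.im|))) : EqOn f 0 {z | 0 ≤ z.re} := by
  set G : ℂ → E := fun z => Complex.exp (-((2 * c / π : ℝ) * (z * Complex.log (1 + z)))) • f z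
    with hG
  have hC0 : 0 ≤ C := by simpa using (norm_nonneg _).trans (hC 0 le_rfl)
  have hnorm : ∀ z : ℂ, 0 ≤ z.re →
      ‖G z‖ ≤ C * rexp (-(2 * c / π * (z.re * Real.log (1 + z.re)))) := fun z hz => by
    calc ‖G z‖ ≤ rexp (c * |z.im| - 2 * c / π * (z.re * Real.log (1 + z.re)))
          * (C * rexp (-(c * |z.im|))) := by
          rw [hG, norm_smul]
          exact mul_le_mul (norm_exp_neg_mul_log_one_add_le hc.le hz) (hC z hz) (norm_nonneg _)
            (Real.exp_pos _).le
      _ = C * rexp (-(2 * c / π * (z.re * Real.log (1 + z.re)))) := by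
          rw [mul_left_comm, ← Real.exp_add]
          ring_nf
  have hbdd : ∀ z : ℂ, 0 ≤ z.re → ‖G z‖ ≤ C := fun z hz => by
    refine (hnorm z hz).trans (mul_le_of_le_one_right hC0 (Real.exp_le_one_iff.2 ?_))
    have := Real.log_nonneg (le_add_of_nonneg_right hz)
    rw [neg_nonpos]
    positivity
  have hGz : EqOn G 0 {z | 0 ≤ z.re} := by
    refine PhragmenLindelof.eq_zero_on_right_half_plane_of_superexponential_decay ?_
      ⟨0, two_pos, 0, IsBigO.of_bound C ?_⟩ (fun n => ?_) ⟨C, fun x => hbdd _ (by simp)⟩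
    · refine DiffContOnCl.smul (DifferentiableOn.diffContOnCl ?_) hf
      rw [Complex.closure_setOfPred_lt_re]
      exact differentiableOn_exp_neg_mul_log_one_add _
    · rw [eventually_inf_principal]
      exact Eventually.of_forall fun z hz => by simpa using hbdd z (le_of_lt hz)
    · have ha : 0 < 2 * c / π := by positivity
      have hlim := (tendsto_exp_pow_mul_exp_neg_mul_log ha n).const_mul C
      rw [mul_zero] at hlim
      refine squeeze_zero' (Eventually.of_forall fun x => by positivity) ?_ hlim
      filter_upwards [eventually_ge_atTop 0] with x hx
      rw [mul_left_comm]
      gcongr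
      exact hnorm x hx
  intro z hz
  simpa [hG] using hGz hz

lemma im_eq_zero_of_frequently_im_eq_zero {f : ℝ → ℂ} (hf : AnalyticOnNhd ℝ f univ) {s₀ : ℝ}
    (h : ∃ᶠ s in 𝓝[≠] s₀, (f s).im = 0) (s : ℝ) : (f s).im = 0 := by
  have him : AnalyticOnNhd ℝ (fun s => (f s).im) univ := fun s hs =>
    (Complex.imCLM.analyticAt (f s)).comp (hf s hs)
  exact him.eqOn_zero_of_preconnected_of_frequently_eq_zero isPreconnected_univ (mem_univ s₀) h
    (mem_univ s)

lemma tendsto_ofReal_nhdsNE (s : ℝ) :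
    Tendsto (fun t : ℝ => (t : ℂ)) (𝓝[≠] s) (𝓝[≠] (s : ℂ)) :=
  Complex.continuous_ofReal.continuousAt.tendsto.inf <| tendsto_principal_principal.2
    fun _ ht h => ht (Complex.ofReal_injective h)

-- Schwarz reflection.
lemma eqOn_conj_comp_conj_of_frequently_im_eq_zero {F : ℂ → ℂ} {Ω : Set ℂ} (hΩ : IsOpen Ω)
    (hΩc : IsPreconnected Ω) (hconj : ∀ z ∈ Ω, (starRingEnd ℂ) z ∈ Ω)
    (hF : DifferentiableOn ℂ F Ω) {s₀ : ℝ} (hs₀ : (s₀ : ℂ) ∈ Ω)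
    (him : ∃ᶠ s : ℝ in 𝓝[≠] s₀, (F s).im = 0) :
    EqOn F (fun z => (starRingEnd ℂ) (F ((starRingEnd ℂ) z))) Ω := by
  refine (hF.analyticOnNhd hΩ).eqOn_of_preconnected_of_frequently_eq
    (DifferentiableOn.analyticOnNhd (fun z hz => ?_) hΩ) hΩc hs₀ ?_
  · have := (hF.differentiableAt (hΩ.mem_nhds (hconj z hz))).conj_conj
    simpa [Function.comp_def] using! this.differentiableWithinAt
  · refine (tendsto_ofReal_nhdsNE s₀).frequently (him.mono fun s hs => ?_)
    rw [Complex.conj_ofReal, Complex.conj_eq_iff_im.2 hs]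

-- The reflection turns decay in the upper half of a right half-plane into decay in both halves.
lemma eqOn_zero_of_norm_le_exp_neg_im {F : ℂ → ℂ} {R c C : ℝ} (hc : 0 < c)
    (hF : DifferentiableOn ℂ F {z | R < z.re})
    (hC : ∀ z : ℂ, R < z.re → ‖F z‖ ≤ C * rexp (-(c * z.im)))
    {s₀ : ℝ} (hs₀ : R < s₀) (him : ∃ᶠ s : ℝ in 𝓝[≠] s₀, (F s).im = 0) :
    EqOn F 0 {z | R < z.re} := by
  have hbound : ∀ z : ℂ, R < z.re → ‖F z‖ ≤ C * rexp (-(c * |z.im|)) := fun z hz => by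
    rcases le_total 0 z.im with h | h
    · rw [abs_of_nonneg h]
      exact hC z hz
    · have hsymm := eqOn_conj_comp_conj_of_frequently_im_eq_zero
        (isOpen_lt continuous_const Complex.continuous_re) (convex_halfSpace_re_gt R).isPreconnected
        (fun w hw => by simpa using hw) hF (s₀ := s₀) (by simpa using hs₀) him hz
      rw [hsymm, Complex.norm_conj, abs_of_nonpos h, ← Complex.conj_im]
      exact hC _ (by rwa [Complex.conj_re])
  intro z hz
  set r : ℝ := (R + z.re) / 2 with hr
  have hz' : R < z.re := hz
  have hRr : R < r := by linarith
  have hshift : EqOn (fun w : ℂ => F (w + r)) 0 {w | 0 ≤ w.re} := by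
    refine eqOn_zero_of_norm_le_exp_neg_abs_im (C := C) hc
      (DifferentiableOn.diffContOnCl ?_) fun w hw => ?_
    · rw [Complex.closure_setOfPred_lt_re]
      refine hF.comp (by fun_prop) fun w hw => ?_
      simpa using hRr.trans_le (le_add_of_nonneg_left hw)
    · simpa using hbound (w + r) (by simpa using hRr.trans_le (le_add_of_nonneg_left hw))
  simpa using hshift (x := z - r) (by simp; linarith)

theorem eq_zero_of_frequently_im_eq_zero {F : ℂ → ℂ} {Ω : Set ℂ} (hΩ : IsOpen Ω)
    (hF : DifferentiableOn ℂ F Ω) (hreal : ∀ s : ℝ, (s : ℂ) ∈ Ω) {R c C : ℝ} (hc : 0 < c)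
    (hhalf : ∀ z : ℂ, R < z.re → z ∈ Ω)
    (hC : ∀ z : ℂ, R < z.re → ‖F z‖ ≤ C * rexp (-(c * z.im))) {s₀ : ℝ}
    (him : ∃ᶠ s : ℝ in 𝓝[≠] s₀, (F s).im = 0) (s : ℝ) : F s = 0 := by
  have hFr : AnalyticOnNhd ℝ (fun s : ℝ => F s) univ := fun s _ =>
    AnalyticAt.comp (f := Complex.ofRealCLM)
      (hF.analyticAt (hΩ.mem_nhds (hreal s))).restrictScalars (Complex.ofRealCLM.analyticAt s)
  have hzero := eqOn_zero_of_norm_le_exp_neg_im hc (hF.mono hhalf) hC (lt_add_one R)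
    (Frequently.of_forall (im_eq_zero_of_frequently_im_eq_zero hFr him))
  refine hFr.eqOn_zero_of_preconnected_of_eventuallyEq_zero isPreconnected_univ
    (mem_univ (R + 1)) ?_ (mem_univ s)
  filter_upwards [Ioi_mem_nhds (lt_add_one R)] with t ht
  exact hzero (by simpa using ht)

/-! ### Continuation of potentials off the real axis -/

lemma hasDerivAt_setIntegral_of_continuousOn {𝕜 α E : Type*} [RCLike 𝕜] [TopologicalSpace α]
    [TopologicalSpace.MetrizableSpace α] [MeasurableSpace α] [OpensMeasurableSpace α]
    {μ : Measure α} [IsFiniteMeasureOnCompacts μ] [NormedAddCommGroup E] [NormedSpace ℝ E]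
    [NormedSpace 𝕜 E] {F F' : 𝕜 → α → E} {Ω : Set 𝕜} {S : Set α} (hΩ : IsOpen Ω) (hS : IsCompact S)
    (hF : ∀ s ∈ Ω, ContinuousOn (F s) S) (hF' : ContinuousOn (Function.uncurry F') (Ω ×ˢ S))
    (hd : ∀ s ∈ Ω, ∀ y ∈ S, HasDerivAt (fun s => F s y) (F' s y) s) {s : 𝕜} (hs : s ∈ Ω) :
    HasDerivAt (fun s => ∫ y in S, F s y ∂μ) (∫ y in S, F' s y ∂μ) s := by
  obtain ⟨ε, hε, hball⟩ := Metric.nhds_basis_closedBall.mem_iff.1 (hΩ.mem_nhds hs)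
  obtain ⟨C, hC⟩ := ((isCompact_closedBall s ε).prod hS).exists_bound_of_continuousOn
    (hF'.mono (prod_mono hball le_rfl))
  have hFs' : ContinuousOn (F' s) S :=
    hF'.comp (f := fun y => (s, y)) (by fun_prop) fun y hy => ⟨hs, hy⟩
  refine (hasDerivAt_integral_of_dominated_loc_of_deriv_le (bound := fun _ => C)
    (Metric.closedBall_mem_nhds s hε) ?_ ((hF s hs).integrableOn_compact hS)
    (hFs'.aestronglyMeasurable_of_isCompact hS hS.measurableSet) ?_ ?_ ?_).2
  · filter_upwards [hΩ.mem_nhds hs] with t ht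
    exact (hF t ht).aestronglyMeasurable_of_isCompact hS hS.measurableSet
  · filter_upwards [ae_restrict_mem hS.measurableSet] with y hy t ht using hC (t, y) ⟨ht, hy⟩
  · exact integrableOn_const hS.measure_ne_top
  · filter_upwards [ae_restrict_mem hS.measurableSet] with y hy t ht using hd t (hball ht) y hy

/-- The squared distance from `y` to a point `s` of the real axis, as a polynomial in `s`, so that
`s` may be complex. -/
def axisDistSq (s y : ℂ) : ℂ := (s - y.re) ^ 2 + y.im ^ 2

/-- The holomorphic continuation in `s` of the distance from `y` to a point `s` of the real axis. -/
def axisDist (s y : ℂ) : ℂ := axisDistSq s y ^ (2⁻¹ : ℂ)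

/-- The set of those `s` for which `axisDist` is holomorphic at `s` for every `y ∈ S`. -/
def axisDomain (S : Set ℂ) : Set ℂ := {s | ∀ y ∈ S, axisDistSq s y ∈ Complex.slitPlane}

/-- The continuation to complex `s` of the Helmholtz potential of a density `g` on `S`, evaluated at
points `s` of the real axis. -/
def axisPotential (S : Set ℂ) (g : ℂ → ℂ) (s : ℂ) : ℂ := ∫ y in S, hankel (axisDist s y) * g y

section

variable {S : Set ℂ} {g : ℂ → ℂ} {s y : ℂ}

lemma axisDistSq_ofReal (s : ℝ) (y : ℂ) : axisDistSq s y = (‖y - s‖ ^ 2 : ℝ) := by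
  simp only [axisDistSq, Complex.sq_norm, Complex.normSq_apply, Complex.sub_re, Complex.sub_im,
    Complex.ofReal_re, Complex.ofReal_im]
  push_cast
  ring

lemma axisDistSq_mem_slitPlane_of_ofReal {s : ℝ} (hy : y.im ≠ 0) :
    axisDistSq s y ∈ Complex.slitPlane := by
  have hne : y - s ≠ 0 := fun h => hy (by simpa using congrArg Complex.im h)
  rw [axisDistSq_ofReal, Complex.ofReal_mem_slitPlane]
  positivity

lemma axisDistSq_mem_slitPlane_of_re_lt (h : y.re < s.re) :
    axisDistSq s y ∈ Complex.slitPlane := by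
  have hre : (axisDistSq s y).re = (s.re - y.re) ^ 2 - s.im ^ 2 + y.im ^ 2 := by
    simp [axisDistSq, pow_two]
  have him : (axisDistSq s y).im = 2 * (s.re - y.re) * s.im := by
    simp [axisDistSq, pow_two]
    ring
  have hpos := sub_pos.2 h
  rw [Complex.mem_slitPlane_iff, hre, him]
  by_cases hs : s.im = 0
  · left
    rw [hs]
    nlinarith [pow_pos hpos 2, sq_nonneg y.im]
  · right
    exact mul_ne_zero (mul_ne_zero two_ne_zero hpos.ne') hs

lemma continuous_axisDistSq : Continuous (Function.uncurry axisDistSq) := by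
  unfold Function.uncurry axisDistSq
  fun_prop

lemma isOpen_axisDomain (hS : IsCompact S) : IsOpen (axisDomain S) :=
  isOpen_iff_mem_nhds.2 fun _ hs => hS.eventually_forall_of_forall_eventually fun y hy =>
    continuous_axisDistSq.continuousAt.eventually_mem
      (Complex.isOpen_slitPlane.mem_nhds (hs y hy))

lemma axisDist_sq (s y : ℂ) : axisDist s y ^ 2 = axisDistSq s y := by
  simp [axisDist]

lemma axisDist_ofReal (s : ℝ) (y : ℂ) : axisDist s y = ‖y - s‖ := by
  have hhalf : (2⁻¹ : ℂ) = ((2⁻¹ : ℝ) : ℂ) := by norm_num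
  rw [axisDist, axisDistSq_ofReal, hhalf, ← Complex.ofReal_cpow (by positivity), ← one_div,
    ← Real.sqrt_eq_rpow, Real.sqrt_sq (norm_nonneg _)]

lemma re_axisDist_pos (h : axisDistSq s y ∈ Complex.slitPlane) : 0 < (axisDist s y).re := by
  have harg : (Complex.log (axisDistSq s y) * 2⁻¹).im = (axisDistSq s y).arg / 2 := by
    rw [← Complex.ofReal_ofNat, ← Complex.ofReal_inv, Complex.im_mul_ofReal, Complex.log_im,
      div_eq_mul_inv]
  rw [axisDist, Complex.cpow_def_of_ne_zero (Complex.slitPlane_ne_zero h), Complex.exp_re, harg]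
  refine mul_pos (Real.exp_pos _) (Real.cos_pos_of_mem_Ioo ?_)
  have hgt := Complex.neg_pi_lt_arg (axisDistSq s y)
  have hlt := (Complex.arg_le_pi (axisDistSq s y)).lt_of_ne (Complex.slitPlane_arg_ne_pi h)
  constructor <;> linarith

lemma axisDist_ne_zero (h : axisDistSq s y ∈ Complex.slitPlane) : axisDist s y ≠ 0 :=
  Complex.ne_zero_of_re_pos (re_axisDist_pos h)

lemma continuousOn_axisDist (S : Set ℂ) :
    ContinuousOn (Function.uncurry axisDist) (axisDomain S ×ˢ S) :=
  continuous_axisDistSq.continuousOn.cpow continuousOn_const fun p hp => hp.1 p.2 hp.2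

lemma hasDerivAt_axisDist (h : axisDistSq s y ∈ Complex.slitPlane) :
    HasDerivAt (fun s => axisDist s y) ((s - y.re) / axisDist s y) s := by
  have hsq : HasDerivAt (fun s => axisDistSq s y) (2 * (s - y.re)) s := by
    simpa [axisDistSq] using!
      (((hasDerivAt_id s).sub_const (y.re : ℂ)).pow 2).add_const ((y.im : ℂ) ^ 2)
  have hpow : axisDistSq s y ^ ((2⁻¹ : ℂ) - 1) = (axisDist s y)⁻¹ := by
    have hne := axisDist_ne_zero h
    rw [Complex.cpow_sub _ _ (Complex.slitPlane_ne_zero h), Complex.cpow_one, ← axisDist,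
      ← axisDist_sq]
    field_simp
  refine (hsq.cpow_const (c := 2⁻¹) h).congr_deriv ?_
  rw [hpow]
  ring

lemma differentiableOn_axisPotential (hS : IsCompact S) (hg : ContinuousOn g S) :
    DifferentiableOn ℂ (axisPotential S g) (axisDomain S) := by
  have hD := continuousOn_axisDist S
  have hpos : ∀ p ∈ axisDomain S ×ˢ S, 0 < (axisDist p.1 p.2).re :=
    fun p hp => re_axisDist_pos (hp.1 p.2 hp.2)
  have hg₂ : ContinuousOn (fun p : ℂ × ℂ => g p.2) (axisDomain S ×ˢ S) :=
    hg.comp continuousOn_snd fun p hp => hp.2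
  have hkernel : ContinuousOn (fun p : ℂ × ℂ => hankel (axisDist p.1 p.2) * g p.2)
      (axisDomain S ×ˢ S) :=
    (ContinuousOn.comp (fun z hz => (differentiableAt_hankel hz).continuousAt.continuousWithinAt)
      hD hpos).mul hg₂
  have hkernel' : ContinuousOn (Function.uncurry fun s y =>
      deriv hankel (axisDist s y) * ((s - y.re) / axisDist s y) * g y) (axisDomain S ×ˢ S) := by
    refine ((ContinuousOn.comp
      (fun z hz => (analyticAt_hankel hz).deriv.continuousAt.continuousWithinAt) hD hpos).mul
      (ContinuousOn.div (by fun_prop) hD ?_)).mul hg₂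
    exact fun p hp => axisDist_ne_zero (hp.1 p.2 hp.2)
  intro s hs
  refine (hasDerivAt_setIntegral_of_continuousOn (isOpen_axisDomain hS) hS ?_ hkernel' ?_
    hs).differentiableAt.differentiableWithinAt
  · exact fun s hs => hkernel.comp (f := fun y => (s, y)) (by fun_prop) fun y hy => ⟨hs, hy⟩
  · intro s hs y hy
    have hderiv := (differentiableAt_hankel (re_axisDist_pos (hs y hy))).hasDerivAt
    exact (hderiv.comp s (hasDerivAt_axisDist (hs y hy))).mul_const (g y)

-- With `D = axisDist s y` and `t = s - re y` one has `(D - t) (D + t) = (im y) ^ 2`.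
lemma norm_axisDist_sub_le (h : y.re + 1 ≤ s.re) :
    ‖axisDist s y - (s - y.re)‖ ≤ y.im ^ 2 := by
  have hprod : (axisDist s y - (s - y.re)) * (axisDist s y + (s - y.re)) = (y.im : ℂ) ^ 2 := by
    have hsq := axisDist_sq s y
    rw [axisDistSq] at hsq
    linear_combination hsq
  have hsum : 1 ≤ ‖axisDist s y + (s - y.re)‖ := by
    have hpos := re_axisDist_pos (axisDistSq_mem_slitPlane_of_re_lt (s := s) (y := y) (by linarith))
    refine le_trans ?_ (Complex.re_le_norm _)
    rw [Complex.add_re, Complex.sub_re, Complex.ofReal_re]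
    linarith
  calc ‖axisDist s y - (s - y.re)‖
      ≤ ‖axisDist s y - (s - y.re)‖ * ‖axisDist s y + (s - y.re)‖ :=
        le_mul_of_one_le_right (norm_nonneg _) hsum
    _ = y.im ^ 2 := by
        rw [← norm_mul, hprod, norm_pow, Complex.norm_real, Real.norm_eq_abs, sq_abs]

lemma norm_hankel_axisDist_le (h : y.re + y.im ^ 2 + 1 ≤ s.re) :
    ‖hankel (axisDist s y)‖ ≤ rexp (y.im ^ 2 - s.im) * √π := by
  have hdist := norm_axisDist_sub_le (s := s) (y := y) (by linarith [sq_nonneg y.im])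
  have hre := (abs_le.1 ((Complex.abs_re_le_norm _).trans hdist)).1
  have him := (abs_le.1 ((Complex.abs_im_le_norm _).trans hdist)).1
  simp only [Complex.sub_re, Complex.sub_im, Complex.ofReal_re, Complex.ofReal_im] at hre him
  have hone : 1 ≤ (axisDist s y).re := by linarith
  refine (norm_hankel_le (one_pos.trans_le hone)).trans ?_
  gcongr
  · linarith
  · exact div_le_self pi_pos.le hone

lemma exists_norm_axisPotential_le (hS : IsCompact S) (hg : ContinuousOn g S) :
    ∃ R C : ℝ, ∀ s : ℂ, R < s.re →
      s ∈ axisDomain S ∧ ‖axisPotential S g s‖ ≤ C * rexp (-s.im) := by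
  obtain ⟨M, hM⟩ := hS.exists_bound_of_continuousOn hg
  obtain ⟨B, hB⟩ := hS.isBounded.exists_norm_le
  refine ⟨B + B ^ 2 + 1, rexp (B ^ 2) * √π * M * volume.real S, fun s hs =>
    ⟨fun y hy => axisDistSq_mem_slitPlane_of_re_lt ?_, ?_⟩⟩
  · nlinarith [(Complex.re_le_norm y).trans (hB y hy)]
  have hkernel : ∀ y ∈ S, ‖hankel (axisDist s y) * g y‖ ≤ rexp (B ^ 2 - s.im) * √π * M := by
    intro y hy
    have hre := (Complex.re_le_norm y).trans (hB y hy)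
    have him : y.im ^ 2 ≤ B ^ 2 := sq_le_sq.2
      (((Complex.abs_im_le_norm y).trans (hB y hy)).trans (le_abs_self B))
    rw [norm_mul]
    refine mul_le_mul ((norm_hankel_axisDist_le (by linarith)).trans ?_) (hM y hy)
      (norm_nonneg _) (by positivity)
    gcongr
  refine (norm_setIntegral_le_of_norm_le_const hS.measure_lt_top hkernel).trans_eq ?_
  rw [sub_eq_add_neg, Real.exp_add]
  ring

end

/-! ### Outgoing solutions on the real axis -/

lemma exists_contDiff_eqOn_compl {E F : Type*} [NormedAddCommGroup E] [NormedSpace ℝ E]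
    [FiniteDimensional ℝ E] [NormedAddCommGroup F] [NormedSpace ℝ F] {n : ℕ∞} {V N : Set E}
    (hV : IsOpen V) (hVN : Vᶜ ⊆ interior N) {Ψ : E → F} (hΨ : ContDiffOn ℝ n Ψ V) :
    ∃ v : E → F, ContDiff ℝ n v ∧ EqOn v Ψ Nᶜ := by
  obtain ⟨χ, hχ₁, hχ₀, -⟩ := exists_contMDiffMap_one_nhds_of_subset_interior (n := n)
    (modelWithCornersSelf ℝ E) hV.isClosed_compl hVN
  refine ⟨fun z => (1 - χ z) • Ψ z, contDiff_iff_contDiffAt.2 fun z => ?_, fun z hz => ?_⟩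
  · by_cases hz : z ∈ V
    · exact (contDiffAt_const.sub χ.contMDiff.contDiff.contDiffAt).smul
        (hΨ.contDiffAt (hV.mem_nhds hz))
    · refine contDiffAt_const (c := (0 : F)) |>.congr_of_eventuallyEq ?_
      filter_upwards [eventually_nhdsSet_iff_forall.1 hχ₁ z hz] with y hy
      rw [hy, sub_self, zero_smul]
  · simp [hχ₀ z hz]

lemma IsOutgoing.congr {E : Type*} [NormedAddCommGroup E] [NormedSpace ℝ E] {v w : E → ℂ} {p : E}
    (h : IsOutgoing v p) (hvw : v =ᶠ[cobounded E] w) : IsOutgoing w p := by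
  refine IsLittleO.congr' h ?_ EventuallyEq.rfl
  filter_upwards [eventually_cobounded_forall_mem_closedBall hvw 1] with y hy
  have hnhds : v =ᶠ[𝓝 y] w :=
    eventually_of_mem (Metric.closedBall_mem_nhds y one_pos) hy
  rw [hnhds.fderiv_eq, hnhds.eq_of_nhds]

section

variable {V : Set ℂ} {Ψ : ℂ → ℂ} {p : ℂ}

lemma IsOutgoing.exists_axisPotential_eq (hout : IsOutgoing Ψ p) (hV : IsOpen V)
    (hVc : IsCompact Vᶜ) (hreal : ∀ s : ℝ, (s : ℂ) ∈ V) (hΨ : ContDiffOn ℝ 2 Ψ V)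
    (hhelm : ∀ z ∈ V, Δ Ψ z + Ψ z = 0) :
    ∃ (N : Set ℂ) (g : ℂ → ℂ), IsCompact N ∧ (∀ y ∈ N, y.im ≠ 0) ∧ Continuous g ∧
      ∀ s : ℝ, axisPotential N g s = -(2 * π * Ψ s) := by
  obtain ⟨N, hN, hVN, hNim⟩ := exists_compact_between (U := {z : ℂ | z.im ≠ 0}) hVc
    (isOpen_ne_fun Complex.continuous_im continuous_const)
    fun z hz h => hz ((Complex.ext rfl h : z = z.re) ▸ hreal z.re)
  obtain ⟨v, hv, hvΨ⟩ := exists_contDiff_eqOn_compl (n := 2) hV hVN hΨ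
  set g : ℂ → ℂ := fun y => Δ v y + v y
  have hg₀ : ∀ y ∉ N, g y = 0 := fun y hy => by
    have hnhds : v =ᶠ[𝓝 y] Ψ := hvΨ.eventuallyEq_of_mem (hN.isClosed.isOpen_compl.mem_nhds hy)
    have hyV : y ∈ V := not_not.1 fun h => hy (interior_subset (hVN h))
    rw [← hhelm y hyV]
    exact congrArg₂ (· + ·) (laplacian_congr_nhds hnhds).eq_of_nhds hnhds.eq_of_nhds
  have hNreal (s : ℝ) : (s : ℂ) ∉ N := fun hs => hNim hs (Complex.ofReal_im s)
  have hgN : tsupport g ⊆ N :=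
    closure_minimal (fun y hy => not_not.1 fun h => hy (hg₀ y h)) hN.isClosed
  have hvout : IsOutgoing v p :=
    hout.congr (hvΨ.symm.eventuallyEq_of_mem (isBounded_def.1 hN.isBounded))
  refine ⟨N, g, hN, fun y hy => hNim hy, (continuous_laplacian hv).add hv.continuous, fun s => ?_⟩
  rw [axisPotential, setIntegral_eq_integral_of_forall_compl_eq_zero fun y hy => by
    rw [hg₀ y hy, mul_zero], ← hvΨ (hNreal s)]
  simp_rw [axisDist_ofReal]
  exact hvout.integral_hankel_mul hv (.intro hN hg₀) fun h => hNreal s (hgN h)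

theorem IsOutgoing.apply_ofReal_eq_zero_of_frequently_im_eq_zero (hout : IsOutgoing Ψ p)
    (hV : IsOpen V) (hVc : IsCompact Vᶜ) (hreal : ∀ s : ℝ, (s : ℂ) ∈ V) (hΨ : ContDiffOn ℝ 2 Ψ V)
    (hhelm : ∀ z ∈ V, Δ Ψ z + Ψ z = 0) {s₀ : ℝ} (him : ∃ᶠ s : ℝ in 𝓝[≠] s₀, (Ψ s).im = 0)
    (s : ℝ) : Ψ s = 0 := by
  obtain ⟨N, g, hN, hNim, hg, hpot⟩ := hout.exists_axisPotential_eq hV hVc hreal hΨ hhelm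
  obtain ⟨R, C, hRC⟩ := exists_norm_axisPotential_le hN hg.continuousOn
  have hzero : axisPotential N g s = 0 :=
    eq_zero_of_frequently_im_eq_zero (isOpen_axisDomain hN)
      (differentiableOn_axisPotential hN hg.continuousOn)
      (fun t y hy => axisDistSq_mem_slitPlane_of_ofReal (hNim y hy)) one_pos
      (fun z hz => (hRC z hz).1) (fun z hz => by simpa using (hRC z hz).2)
      (him.mono fun t ht => by simp [hpot, Complex.mul_im, ht]) s
  simpa [hpot, pi_ne_zero] using hzero

end

/-! ### Radiation solutions -/

section

variable {E E' F : Type*} [NormedAddCommGroup F] [NormedSpace ℝ F]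

section

variable [NormedAddCommGroup E] [NormedSpace ℝ E] [NormedAddCommGroup E'] [NormedSpace ℝ E']
  (A : E' ≃L[ℝ] E) (x₀ : E) (c : ℝ) (f : E → F) (z : E')

lemma fderiv_comp_const_add_smul : fderiv ℝ (fun z => f (x₀ + c • A z)) z =
    c • (fderiv ℝ f (x₀ + c • A z)).comp (A : E' →L[ℝ] E) := by
  have hA := A.comp_right_fderiv (f := fun y => f (x₀ + c • y)) (x := z)
  rw [fderiv_comp_smul (f := fun y => f (x₀ + y)), fderiv_comp_add_left] at hA
  exact hA

lemma fderiv_fderiv_comp_const_add_smul_apply (h k : E') :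
    fderiv ℝ (fderiv ℝ fun z => f (x₀ + c • A z)) z h k =
      c ^ 2 • fderiv ℝ (fderiv ℝ f) (x₀ + c • A z) (A h) (A k) := by
  have hcomp := (A.symm.arrowCongr (.refl ℝ F)).comp_fderiv (x := z)
    (f := fun z => fderiv ℝ f (x₀ + c • A z))
  rw [fderiv_comp_const_add_smul A x₀ c (fderiv ℝ f)] at hcomp
  have hsmul := fderiv_const_smul_field (𝕜 := ℝ) c
    (f := A.symm.arrowCongr (.refl ℝ F) ∘ fun z => fderiv ℝ f (x₀ + c • A z))
  have hfderiv : (fderiv ℝ fun z => f (x₀ + c • A z)) =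
      c • (A.symm.arrowCongr (.refl ℝ F) ∘ fun z => fderiv ℝ f (x₀ + c • A z)) :=
    funext fun z => fderiv_comp_const_add_smul A x₀ c f z
  rw [hfderiv, hsmul, Pi.smul_apply, hcomp]
  simp [smul_smul, pow_two]

end

section

variable [NormedAddCommGroup E] [InnerProductSpace ℝ E]
  [NormedAddCommGroup E'] [InnerProductSpace ℝ E']

lemma exists_linearIsometryEquiv_apply_eq (A : E' ≃ₗᵢ[ℝ] E) {v : E'} {w : E} (h : ‖v‖ = ‖w‖) :
    ∃ B : E' ≃ₗᵢ[ℝ] E, B v = w :=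
  ⟨A.trans (ℝ ∙ (A v - w))ᗮ.reflection, Submodule.reflection_sub ((A.norm_map v).trans h)⟩

variable [FiniteDimensional ℝ E] [FiniteDimensional ℝ E']

lemma laplacian_comp_const_add_smul (A : E' ≃ₗᵢ[ℝ] E) (x₀ : E) (c : ℝ) (f : E → F) (z : E') :
    Δ (fun z => f (x₀ + c • A z)) z = c ^ 2 • Δ f (x₀ + c • A z) := by
  rw [laplacian_eq_iteratedFDeriv_stdOrthonormalBasis,
    laplacian_eq_iteratedFDeriv_orthonormalBasis f ((stdOrthonormalBasis ℝ E').map A)]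
  simp only [iteratedFDeriv_two_apply, Finset.smul_sum]
  exact Finset.sum_congr rfl fun i _ =>
    fderiv_fderiv_comp_const_add_smul_apply A.toContinuousLinearEquiv x₀ c f z _ _

end

end
section

variable {E E' : Type*} [NormedAddCommGroup E] [NormedSpace ℝ E] [NormedAddCommGroup E']
  [NormedSpace ℝ E'] {κ : ℝ}

lemma isOutgoing_comp_const_add_inv_smul (hκ : 0 < κ) {ψ : E → ℂ}
    (hψ : (fun x => fderiv ℝ ψ x (‖x‖⁻¹ • x) - I * κ * ψ x) =o[cobounded E] fun x => (√‖x‖)⁻¹)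
    (A : E' ≃ₗᵢ[ℝ] E) (x₀ : E) :
    IsOutgoing (fun z => ψ (x₀ + κ⁻¹ • A z)) (-(κ • A.symm x₀)) := by
  set p : E' := -(κ • A.symm x₀) with hp
  have hT (z : E') : x₀ + κ⁻¹ • A z = κ⁻¹ • A (z - p) := by
    rw [hp, sub_neg_eq_add, map_add, map_smul, A.apply_symm_apply, smul_add,
      inv_smul_smul₀ hκ.ne', add_comm]
  have hnorm (z : E') : ‖x₀ + κ⁻¹ • A z‖ = κ⁻¹ * ‖z - p‖ := by
    rw [hT, norm_smul, A.norm_map, norm_of_nonneg (inv_nonneg.2 hκ.le)]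
  have hlim : Tendsto (fun z => x₀ + κ⁻¹ • A z) (cobounded E') (cobounded E) := by
    rw [← tendsto_norm_atTop_iff_cobounded]
    simp only [hnorm]
    exact (tendsto_norm_cobounded_atTop.comp (tendsto_sub_const_cobounded p)).const_mul_atTop
      (inv_pos.2 hκ)
  have hsqrt : (fun z => (√‖x₀ + κ⁻¹ • A z‖)⁻¹) =Θ[cobounded E'] fun z => (√‖z‖)⁻¹ := by
    simp only [hnorm, sqrt_mul (inv_nonneg.2 hκ.le)]
    exact ((isTheta_sqrt_norm_sub_const_cobounded p).const_mul_left (by positivity)).inv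
  refine (((hψ.comp_tendsto hlim).const_mul_left (κ⁻¹ : ℂ)).congr_left fun z => ?_).trans_isTheta
    hsqrt
  have hfderiv := fderiv_comp_const_add_smul A.toContinuousLinearEquiv x₀ κ⁻¹ ψ z
  have hκ' : (κ : ℂ) ≠ 0 := by exact_mod_cast hκ.ne'
  have hdir : A (‖z - p‖⁻¹ • (z - p)) = ‖x₀ + κ⁻¹ • A z‖⁻¹ • (x₀ + κ⁻¹ • A z) := by
    rw [hnorm, hT, map_smul, smul_smul, mul_inv, inv_inv, mul_right_comm, mul_inv_cancel₀ hκ.ne',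
      one_mul]
  calc (κ⁻¹ : ℂ) * (fderiv ℝ ψ (x₀ + κ⁻¹ • A z) (‖x₀ + κ⁻¹ • A z‖⁻¹ • (x₀ + κ⁻¹ • A z))
        - I * κ * ψ (x₀ + κ⁻¹ • A z))
      = (κ⁻¹ : ℂ) * fderiv ℝ ψ (x₀ + κ⁻¹ • A z) (A (‖z - p‖⁻¹ • (z - p)))
        - I * ψ (x₀ + κ⁻¹ • A z) := by
        rw [hdir]
        field_simp
    _ = fderiv ℝ (fun z => ψ (x₀ + κ⁻¹ • A z)) z (‖z - p‖⁻¹ • (z - p))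
        - I * ψ (x₀ + κ⁻¹ • A z) := by
        rw [← Complex.ofReal_inv, ← Complex.real_smul]
        exact congrArg (· - _) (DFunLike.congr_fun hfderiv _).symm

end

lemma isLittleO_inv_sqrt_norm_cobounded_iff {E : Type*} [NormedAddCommGroup E] {U : Set E}
    (hU : U ∈ cobounded E) {w : E → ℂ} : (w =o[cobounded E] fun x => (√‖x‖)⁻¹) ↔
      ∀ ε > 0, ∃ R > 0, ∀ x ∈ U, R ≤ ‖x‖ → ‖(√‖x‖ : ℂ) * w x‖ < ε := by
  have hscale {x : E} (hx : 0 < ‖x‖) (ε : ℝ) :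
      ‖w x‖ ≤ ε * ‖(√‖x‖)⁻¹‖ ↔ ‖(√‖x‖ : ℂ) * w x‖ ≤ ε := by
    rw [norm_mul, Complex.norm_real, norm_inv, norm_of_nonneg (sqrt_nonneg _), ← div_eq_mul_inv,
      le_div_iff₀' (sqrt_pos.2 hx)]
  rw [isLittleO_iff]
  refine ⟨fun h ε hε => ?_, fun h ε hε => ?_⟩
  · obtain ⟨R, -, hR⟩ := hasBasis_cobounded_norm.eventually_iff.1 (h (half_pos hε))
    refine ⟨max R 1, by positivity, fun x _ hx => ?_⟩
    have hx₀ : 0 < ‖x‖ := one_pos.trans_le ((le_max_right R 1).trans hx)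
    exact ((hscale hx₀ _).1 (hR ((le_max_left R 1).trans hx))).trans_lt (half_lt_self hε)
  · obtain ⟨R, hR, hUR⟩ := h ε hε
    filter_upwards [hU, hasBasis_cobounded_norm.mem_of_mem (i := R) trivial] with x hxU hxR
    exact (hscale (hR.trans_le hxR) ε).2 (hUR x hxU hxR).le

lemma laplacian2_eq_laplacian {ψ : R2 → ℂ} {x : R2} (hψ : ContDiffAt ℝ 2 ψ x) :
    laplacian2 ψ x = Δ ψ x := by
  have hd : DifferentiableAt ℝ (fderiv ℝ ψ) x :=
    (hψ.fderiv_right (m := 1) (by norm_num)).differentiableAt one_ne_zero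
  rw [laplacian_eq_iteratedFDeriv_orthonormalBasis ψ (EuclideanSpace.basisFun (Fin 2) ℝ)]
  refine Finset.sum_congr rfl fun i _ => ?_
  rw [fderiv_clm_apply hd (differentiableAt_const _)]
  simp [iteratedFDeriv_two_apply]

section

variable {κ : ℝ} {U : Set R2} {ψ ψ₁ ψ₂ : R2 → ℂ}

lemma isRadiationSolution_iff (hU : IsOpen U) (hUc : IsBounded Uᶜ) :
    IsRadiationSolution κ U ψ ↔ ContDiffOn ℝ 2 ψ U ∧ (∀ x ∈ U, Δ ψ x + κ ^ 2 * ψ x = 0) ∧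
      (fun x => fderiv ℝ ψ x (‖x‖⁻¹ • x) - I * κ * ψ x) =o[cobounded R2] fun x => (√‖x‖)⁻¹ := by
  refine and_congr_right fun hψ => and_congr (forall₂_congr fun x hx => ?_) ?_
  · rw [laplacian2_eq_laplacian (hψ.contDiffAt (hU.mem_nhds hx))]
  · exact (isLittleO_inv_sqrt_norm_cobounded_iff (isBounded_compl_iff.1 hUc)).symm

lemma IsRadiationSolution.sub (hU : IsOpen U) (hUc : IsBounded Uᶜ)
    (h₁ : IsRadiationSolution κ U ψ₁) (h₂ : IsRadiationSolution κ U ψ₂) :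
    IsRadiationSolution κ U (ψ₁ - ψ₂) := by
  rw [isRadiationSolution_iff hU hUc] at h₁ h₂ ⊢
  obtain ⟨hψ₁, hhelm₁, hout₁⟩ := h₁
  obtain ⟨hψ₂, hhelm₂, hout₂⟩ := h₂
  have hc₁ (x) (hx : x ∈ U) : ContDiffAt ℝ 2 ψ₁ x := hψ₁.contDiffAt (hU.mem_nhds hx)
  have hc₂ (x) (hx : x ∈ U) : ContDiffAt ℝ 2 ψ₂ x := hψ₂.contDiffAt (hU.mem_nhds hx)
  refine ⟨hψ₁.sub hψ₂, fun x hx => ?_, (hout₁.sub hout₂).congr' ?_ .rfl⟩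
  · rw [(hc₁ x hx).laplacian_sub (hc₂ x hx), Pi.sub_apply]
    linear_combination hhelm₁ x hx - hhelm₂ x hx
  · filter_upwards [isBounded_def.1 hUc] with x hx
    rw [compl_compl] at hx
    rw [fderiv_sub ((hc₁ x hx).differentiableAt two_ne_zero)
      ((hc₂ x hx).differentiableAt two_ne_zero), sub_apply, Pi.sub_apply]
    ring

theorem IsRadiationSolution.eq_zero_of_frequently_im_eq_zero (h : IsRadiationSolution κ U ψ)
    (hκ : 0 < κ) (hU : IsOpen U) (hUc : IsCompact Uᶜ) {x₀ θ : R2} (hθ : ‖θ‖ = 1)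
    (hline : ∀ s : ℝ, x₀ + s • θ ∈ U) {s₀ : ℝ}
    (him : ∃ᶠ s : ℝ in 𝓝[≠] s₀, (ψ (x₀ + s • θ)).im = 0) (s : ℝ) : ψ (x₀ + s • θ) = 0 := by
  obtain ⟨hψ, hhelm, hout⟩ := (isRadiationSolution_iff hU hUc.isBounded).1 h
  obtain ⟨A, hA⟩ := exists_linearIsometryEquiv_apply_eq Complex.orthonormalBasisOneI.repr
    (v := 1) (norm_one.trans hθ.symm)
  have hAreal (s : ℝ) : κ⁻¹ • A s = (κ⁻¹ * s) • θ := by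
    rw [← mul_one (s : ℂ), ← Complex.real_smul, map_smul, hA, smul_smul]
  have hTreal (s : ℝ) : x₀ + κ⁻¹ • A s ∈ U := by
    rw [hAreal]
    exact hline _
  let T : ℂ ≃ₜ R2 := (A.toHomeomorph.trans (.smulOfNeZero κ⁻¹ (inv_ne_zero hκ.ne'))).trans
    (.addLeft x₀)
  have hκs : Tendsto (fun s => κ * s) (𝓝[≠] s₀) (𝓝[≠] (κ * s₀)) :=
    tendsto_nhdsWithin_of_tendsto_nhds_of_eventually_within _
      ((continuous_const_mul κ).continuousAt.mono_left nhdsWithin_le_nhds)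
      (eventually_mem_nhdsWithin.mono fun s hs => (mul_right_injective₀ hκ.ne').ne hs)
  have hκ' : (κ : ℂ) ≠ 0 := by exact_mod_cast hκ.ne'
  have hzero := (isOutgoing_comp_const_add_inv_smul hκ hout A x₀
    ).apply_ofReal_eq_zero_of_frequently_im_eq_zero (hU.preimage T.continuous)
    (by rw [← preimage_compl]; exact T.isCompact_preimage.2 hUc)
    hTreal (hψ.comp (by fun_prop) fun z hz => hz)
    (fun z hz => by
      rw [laplacian_comp_const_add_smul, Complex.real_smul, Complex.ofReal_pow, Complex.ofReal_inv]
      have hhelmz : Δ ψ (x₀ + κ⁻¹ • A z) = -(κ ^ 2 * ψ (x₀ + κ⁻¹ • A z)) :=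
        eq_neg_of_add_eq_zero_left (hhelm _ hz)
      rw [hhelmz]
      field_simp
      ring)
    (hκs.frequently (him.mono fun t ht => by
      rwa [hAreal, inv_mul_cancel_left₀ hκ.ne'])) (κ * s)
  rwa [hAreal, inv_mul_cancel_left₀ hκ.ne'] at hzero

theorem im_determines_radiation_solution_on_line_general (hκ : 0 < κ) (hU : IsOpen U)
    (hUc : IsCompact Uᶜ) {x₀ θ : R2} (hθ : ‖θ‖ = 1) (hline : ∀ s : ℝ, x₀ + s • θ ∈ U)
    (h₁ : IsRadiationSolution κ U ψ₁) (h₂ : IsRadiationSolution κ U ψ₂) {s₀ : ℝ}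
    (him : ∃ᶠ s : ℝ in 𝓝[≠] s₀, (ψ₁ (x₀ + s • θ)).im = (ψ₂ (x₀ + s • θ)).im) (s : ℝ) :
    ψ₁ (x₀ + s • θ) = ψ₂ (x₀ + s • θ) :=
  sub_eq_zero.1 <| (h₁.sub hU hUc.isBounded h₂).eq_zero_of_frequently_im_eq_zero hκ hU hUc hθ hline
    (him.mono fun s hs => by rw [Pi.sub_apply, Complex.sub_im, hs, sub_self]) s

end

theorem im_determines_radiation_solution_on_line
    (κ : ℝ) (hκ : 0 < κ)
    (U : Set R2) (hUopen : IsOpen U) (hUconn : IsConnected U) (hKcpt : IsCompact Uᶜ)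
    (x₀ θ : R2) (hθ : ‖θ‖ = 1)
    (L : Set R2) (hL : L = Set.range (fun s : ℝ => x₀ + s • θ)) (hLU : L ⊆ U)
    (a b : ℝ) (hab : a < b)
    (Λ : Set R2) (hΛ : Λ = (fun s : ℝ => x₀ + s • θ) '' Set.Ioo a b)
    (ψ₁ ψ₂ : R2 → ℂ)
    (h₁ : IsRadiationSolution κ U ψ₁) (h₂ : IsRadiationSolution κ U ψ₂)
    (him : ∀ x ∈ Λ, (ψ₁ x).im = (ψ₂ x).im) :
    ∀ x ∈ L, ψ₁ x = ψ₂ x := by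
  subst hL hΛ
  rintro _ ⟨s, rfl⟩
  obtain ⟨s₀, hs₀⟩ := nonempty_Ioo.2 hab
  have him' : ∀ᶠ s : ℝ in 𝓝[≠] s₀, (ψ₁ (x₀ + s • θ)).im = (ψ₂ (x₀ + s • θ)).im := by
    filter_upwards [nhdsWithin_le_nhds (Ioo_mem_nhds hs₀.1 hs₀.2)] with t ht
    exact him _ (mem_image_of_mem _ ht)
  exact im_determines_radiation_solution_on_line_general hκ hUopen hKcpt hθ
    (fun t => hLU (mem_range_self t)) h₁ h₂ him'.frequently s
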